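/- arXiv:2501.08526 — 9 statements merged into one kernel-verified Lean document; each statement's English description precedes it below -/
import Mathlib

section
/- Let A be a unital C*-algebra over ℂ admitting a matricial chain (n_k, A_k). Let p be a prime and m a natural number. If there exists an injective unital *-algebra homomorphism from the matrix algebra M_{p^m}(ℂ) into A, then there exists k such that p^m divides n_k. -/
open Filter Topology

/-- Near an almost idempotent self-adjoint element there is an idempotent. -/
lemma uhf_proj {B : Type*} [CStarAlgebra B] (x : B) (hx : IsSelfAdjoint x) (δ : ℝ)
    (hδ : δ ≤ 1 / 10) (h : ‖x * x - x‖ ≤ δ) : ∃ q : B, q * q = q ∧ ‖q - x‖ ≤ 3 * δ := by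
  have hδ0 : 0 ≤ δ := (norm_nonneg _).trans h
  set f : ℝ → ℝ := fun t => max 0 (min 1 (3 * t - 1)) with hf
  have hfc : Continuous f := by fun_prop
  have hspec : ∀ t ∈ spectrum ℝ x, |t * t - t| ≤ δ := by
    intro t ht
    have h1 := norm_apply_le_norm_cfc (fun t : ℝ => t * t - t) x ht
    have h2 : cfc (fun t : ℝ => t * t - t) x = x * x - x := by
      rw [cfc_sub (fun t : ℝ => t * t) (fun t => t) x, cfc_mul (fun t : ℝ => t) (fun t => t) x,
        cfc_id' ℝ x]
    rw [h2] at h1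
    exact h1.trans h
  have hcase : ∀ t ∈ spectrum ℝ x, (f t = 0 ∧ t ≤ 1 / 3) ∨ (f t = 1 ∧ 2 / 3 ≤ t) := by
    intro t ht
    have h1 := abs_le.1 (hspec t ht)
    rcases le_or_gt t (1 / 3) with h2 | h2
    · left
      refine ⟨?_, h2⟩
      have : min 1 (3 * t - 1) ≤ 0 := (min_le_right _ _).trans (by linarith)
      simp only [hf]; exact max_eq_left this
    · rcases le_or_gt (2 / 3) t with h3 | h3
      · right
        refine ⟨?_, h3⟩
        have : min 1 (3 * t - 1) = 1 := min_eq_left (by linarith)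
        simp only [hf]; rw [this]; norm_num
      · exfalso
        nlinarith [mul_pos (sub_pos.2 h2) (sub_pos.2 h3)]
  refine ⟨cfc f x, ?_, ?_⟩
  · rw [← cfc_mul f f x]
    apply cfc_congr
    intro t ht
    rcases hcase t ht with h1 | h1 <;> simp [h1.1]
  · have h1 : cfc f x - x = cfc (fun t => f t - t) x := by
      rw [cfc_sub f (fun t => t) x, cfc_id' ℝ x]
    rw [h1]
    apply norm_cfc_le (by positivity)
    intro t ht
    have h2 := abs_le.1 (hspec t ht)
    rw [Real.norm_eq_abs, abs_le]
    rcases hcase t ht with ⟨h3, h4⟩ | ⟨h3, h4⟩ <;> rw [h3]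
    · constructor
      · rcases le_or_gt t 0 with h5 | h5 <;> nlinarith
      · rcases le_or_gt t 0 with h5 | h5 <;> nlinarith
    · constructor
      · rcases le_or_gt t 1 with h5 | h5 <;> nlinarith
      · rcases le_or_gt t 1 with h5 | h5 <;> nlinarith

/-- Dimension count. -/
lemma uhf_count (n N : ℕ) (hn : 0 < n) (Q : Matrix (Fin n) (Fin n) ℂ)
    (X Y : Fin N → Matrix (Fin n) (Fin n) ℂ) (hQ : Q * Q = Q)
    (h1 : ∀ c : Fin N → Matrix (Fin n) (Fin n) ℂ, (∀ i, Q * c i = c i) →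
      ∑ i, X i * c i = 0 → ∀ i, c i = 0)
    (h2 : ∀ c : Matrix (Fin n) (Fin n) ℂ, (∀ i, Q * Y i * c = 0) → c = 0) : N ∣ n := by
  let W : Submodule ℂ (Matrix (Fin n) (Fin n) ℂ) :=
    { carrier := {c | Q * c = c}
      add_mem' := by
        intro a b ha hb
        simp only [Set.mem_ofPred_eq] at *
        rw [mul_add, ha, hb]
      zero_mem' := by simp
      smul_mem' := by
        intro r a ha
        simp only [Set.mem_ofPred_eq] at *
        rw [mul_smul_comm, ha] }
  let V : Submodule ℂ (Fin n → ℂ) :=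
    { carrier := {c | Q.mulVec c = c}
      add_mem' := by
        intro a b ha hb
        simp only [Set.mem_ofPred_eq] at *
        rw [Matrix.mulVec_add, ha, hb]
      zero_mem' := by simp
      smul_mem' := by
        intro r a ha
        simp only [Set.mem_ofPred_eq] at *
        rw [Matrix.mulVec_smul, ha] }
  have hcol : ∀ (c : Matrix (Fin n) (Fin n) ℂ) (j : Fin n),
      Q.mulVec (fun i => c i j) = fun i => (Q * c) i j := by
    intro c j; ext i; simp [Matrix.mul_apply, Matrix.mulVec, dotProduct]
  let e : W ≃ₗ[ℂ] (Fin n → V) :=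
    { toFun := fun c j => ⟨fun i => c.1 i j, by
        change Q.mulVec _ = _
        rw [hcol, show Q * c.1 = c.1 from c.2]⟩
      invFun := fun v => ⟨Matrix.of fun i j => (v j).1 i, by
        change Q * _ = _
        ext i j
        have h := congrFun (hcol (Matrix.of fun i j => (v j).1 i) j) i
        rw [← h]
        exact congrFun (show Q.mulVec (v j).1 = (v j).1 from (v j).2) i⟩
      map_add' := by intro a b; rfl
      map_smul' := by intro a b; rfl
      left_inv := by intro a; rfl
      right_inv := by intro a; rfl }
  have hW : Module.finrank ℂ W = n * Module.finrank ℂ V := by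
    rw [e.finrank_eq, Module.finrank_pi_fintype]; simp
  have hM : Module.finrank ℂ (Matrix (Fin n) (Fin n) ℂ) = n * n := by
    rw [Module.finrank_matrix]; simp
  have hP : Module.finrank ℂ (Fin N → W) = N * Module.finrank ℂ W := by
    rw [Module.finrank_pi_fintype]; simp
  let T : (Fin N → W) →ₗ[ℂ] Matrix (Fin n) (Fin n) ℂ :=
    { toFun := fun c => ∑ i, X i * (c i).1
      map_add' := by intro a b; simp [mul_add, Finset.sum_add_distrib]
      map_smul' := by intro r a; simp [Finset.smul_sum] }
  let S : Matrix (Fin n) (Fin n) ℂ →ₗ[ℂ] (Fin N → W) :=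
    { toFun := fun c i => ⟨Q * Y i * c, by
        change Q * _ = _
        rw [← mul_assoc, ← mul_assoc, hQ]⟩
      map_add' := by intro a b; ext1 i; apply Subtype.ext; simp [mul_add]
      map_smul' := by intro r a; ext1 i; apply Subtype.ext; simp }
  have hT : Function.Injective T := by
    rw [injective_iff_map_eq_zero]
    intro c hc
    ext1 i
    apply Subtype.ext
    exact h1 (fun i => (c i).1) (fun i => (c i).2) hc i
  have hS : Function.Injective S := by
    rw [injective_iff_map_eq_zero]
    intro c hc
    apply h2
    intro i
    exact congrArg Subtype.val (congrFun hc i)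
  have l1 := LinearMap.finrank_le_finrank_of_injective hT
  have l2 := LinearMap.finrank_le_finrank_of_injective hS
  have l3 : n * n = n * (N * Module.finrank ℂ V) := by
    rw [hP, hM, hW] at *
    have := le_antisymm l2 l1
    rw [this]; ring
  exact ⟨_, Nat.eq_of_mul_eq_mul_left hn l3⟩

/-- The norm estimates give the injectivity needed for the dimension count. -/
lemma uhf_count_normed {B : Type*} [NormedRing B] [StarRing B] [Algebra ℂ B]
    (n N : ℕ) (hn : 0 < n) (ψ : B ≃⋆ₐ[ℂ] Matrix (Fin n) (Fin n) ℂ) (q : B) (x y : Fin N → B)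
    (hq : q * q = q) (h1 : ‖∑ i, x i * q * y i - 1‖ < 1)
    (h2 : ∀ i j, ‖q * y i * x j * q - (if i = j then q else 0)‖ < 1 / ((N : ℝ) + 1)) :
    N ∣ n := by
  apply uhf_count n N hn (ψ q) (fun i => ψ (x i)) (fun i => ψ (y i))
  · rw [← map_mul, hq]
  · intro c hc hsum
    obtain ⟨b, rfl⟩ : ∃ b : Fin N → B, c = fun i => ψ (b i) :=
      ⟨fun i => ψ.symm (c i), by simp⟩
    have hb : ∀ i, q * b i = b i := by
      intro i
      apply EquivLike.injective ψ
      simpa using hc i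
    have hs : ∑ i, x i * b i = 0 := by
      apply EquivLike.injective ψ
      simpa using hsum
    have key : ∀ i, ‖b i‖ ≤ ∑ j, 1 / ((N : ℝ) + 1) * ‖b j‖ := by
      intro i
      have e1 : ∑ j, (q * y i * x j * q - (if i = j then q else 0)) * b j = - b i := by
        have e2 : ∀ j, (q * y i * x j * q - (if i = j then q else 0)) * b j
            = q * y i * (x j * b j) - (if i = j then b j else 0) := by
          intro j
          split_ifs <;> simp [sub_mul, mul_assoc, hb j]
        simp only [e2, Finset.sum_sub_distrib, ← Finset.mul_sum, hs]
        simp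
      rw [← norm_neg, ← e1]
      refine (norm_sum_le _ _).trans (Finset.sum_le_sum fun j _ => ?_)
      exact (norm_mul_le _ _).trans (mul_le_mul_of_nonneg_right (h2 i j).le (norm_nonneg _))
    have tot : ∑ i, ‖b i‖ ≤ N * (1 / ((N : ℝ) + 1) * ∑ j, ‖b j‖) := by
      refine (Finset.sum_le_sum fun i _ => key i).trans ?_
      simp [← Finset.mul_sum]
    have hnn : 0 ≤ ∑ i, ‖b i‖ := Finset.sum_nonneg fun i _ => norm_nonneg _
    have hz : ∑ i, ‖b i‖ = 0 := by
      have hN : (0 : ℝ) < (N : ℝ) + 1 := by positivity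
      have e3 : (N : ℝ) * (1 / ((N : ℝ) + 1) * ∑ j, ‖b j‖) * ((N : ℝ) + 1)
          = N * ∑ j, ‖b j‖ := by field_simp
      have := mul_le_mul_of_nonneg_right tot hN.le
      rw [e3] at this
      nlinarith
    intro i
    have := (Finset.sum_eq_zero_iff_of_nonneg (fun i _ => norm_nonneg (b i))).1 hz i
      (Finset.mem_univ i)
    simp [norm_eq_zero.1 this]
  · intro c hc
    obtain ⟨b, rfl⟩ : ∃ b : B, c = ψ b := ⟨ψ.symm c, by simp⟩
    have hb : ∀ i, q * y i * b = 0 := by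
      intro i
      apply EquivLike.injective ψ
      simpa using hc i
    have e1 : (∑ i, x i * q * y i - 1) * b = - b := by
      rw [sub_mul, Finset.sum_mul]
      have : ∀ i, x i * q * y i * b = 0 := by
        intro i
        rw [mul_assoc (x i), mul_assoc (x i), hb i, mul_zero]
      simp [this]
    have e2 : ‖b‖ ≤ ‖∑ i, x i * q * y i - 1‖ * ‖b‖ := by
      calc ‖b‖ = ‖(∑ i, x i * q * y i - 1) * b‖ := by rw [e1, norm_neg]
        _ ≤ _ := norm_mul_le _ _
    have : b = 0 := by
      by_contra hne
      have := norm_pos_iff.2 hne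
      nlinarith
    simp [this]

/-- Simultaneous approximation in a dense increasing union. -/
lemma uhf_approx {A : Type*} [CStarAlgebra A] (Ak : ℕ → StarSubalgebra ℂ A)
    (hmono : ∀ k, Ak k ≤ Ak (k + 1)) (hdense : Dense (⋃ k, (Ak k : Set A)))
    {N : ℕ} (E : Fin N → A) (ε : ℝ) (hε : 0 < ε) :
    ∃ k, ∃ a : Fin N → Ak k, ∀ i, ‖(a i : A) - E i‖ < ε := by
  have hm : Monotone Ak := monotone_nat_of_le_succ hmono
  have h : ∀ i, ∃ k, ∃ a ∈ Ak k, ‖a - E i‖ < ε := by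
    intro i
    obtain ⟨a, ha, hd⟩ := hdense.exists_dist_lt (E i) hε
    obtain ⟨k, hk⟩ := Set.mem_iUnion.1 ha
    exact ⟨k, a, hk, by rwa [dist_comm, dist_eq_norm] at hd⟩
  choose k a ha hd using h
  exact ⟨Finset.univ.sup k, fun i => ⟨a i, hm (Finset.le_sup (Finset.mem_univ i)) (ha i)⟩, hd⟩

/-- If a unital C*-algebra `A` admits a matricial chain `(n k, Ak k)` and
`M_{p^m}(ℂ)` unitally *-embeds into `A` for a prime `p`, then `p^m` divides some `n k`. -/
theorem uhf_embedding_divides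
    {A : Type*} [CStarAlgebra A]
    (n : ℕ → ℕ) (Ak : ℕ → StarSubalgebra ℂ A)
    (hpos : ∀ k, 0 < n k)
    (hmono : ∀ k, Ak k ≤ Ak (k + 1))
    (hiso : ∀ k, Nonempty ((Ak k) ≃⋆ₐ[ℂ] Matrix (Fin (n k)) (Fin (n k)) ℂ))
    (hdense : Dense (⋃ k, (Ak k : Set A)))
    (p m : ℕ) (hp : p.Prime)
    (φ : Matrix (Fin (p ^ m)) (Fin (p ^ m)) ℂ →⋆ₐ[ℂ] A)
    (hφ : Function.Injective φ) :
    ∃ k, p ^ m ∣ n k := by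
  have hN0 : 0 < p ^ m := pow_pos hp.pos m
  generalize p ^ m = N at *
  let o : Fin N := ⟨0, hN0⟩
  let u : Fin N → Matrix (Fin N) (Fin N) ℂ := fun i => Matrix.single i o 1
  let E : Fin N → A := fun i => φ (u i)
  have hstar : ∀ i, star (E i) = φ (Matrix.single o i 1) := by
    intro i
    simp only [E, u]
    rw [← map_star, Matrix.star_eq_conjTranspose, Matrix.conjTranspose_single]; simp
  have hEo : star (E o) = E o := hstar o
  have hEo2 : E o * E o = E o := by
    simp only [E, u]
    rw [← map_mul]; simp
  have hsum : ∑ i, E i * E o * star (E i) = 1 := by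
    simp only [hstar]
    simp only [E, u]
    simp only [← map_mul, ← map_sum]
    simp only [Matrix.single_mul_single_same, mul_one]
    rw [Matrix.sum_single_one, map_one]
  have hij : ∀ i j, E o * star (E i) * E j * E o = if i = j then E o else 0 := by
    intro i j
    simp only [hstar]
    simp only [E, u]
    simp only [← map_mul]
    split_ifs with h
    · subst h; simp
    · simp [Matrix.single_mul_single_of_ne, h]
  have hev : ∀ᶠ z : (Fin N → A) × A in 𝓝 (E, E o),
      ‖∑ i, z.1 i * z.2 * star (z.1 i) - 1‖ < 1 ∧
      ∀ i j, ‖z.2 * star (z.1 i) * z.1 j * z.2 - (if i = j then z.2 else 0)‖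
        < 1 / ((N : ℝ) + 1) := by
    refine Filter.Eventually.and ?_ (Filter.eventually_all.2 fun i => Filter.eventually_all.2 fun j => ?_)
    · have hc : Continuous fun z : (Fin N → A) × A =>
          ‖∑ i, z.1 i * z.2 * star (z.1 i) - 1‖ := by fun_prop
      refine hc.continuousAt.eventually_lt_const ?_
      simp [hsum]
    · have hc : Continuous fun z : (Fin N → A) × A =>
          ‖z.2 * star (z.1 i) * z.1 j * z.2 - (if i = j then z.2 else 0)‖ := by
        split_ifs <;> fun_prop
      refine hc.continuousAt.eventually_lt_const ?_
      simp only [hij, sub_self, norm_zero]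
      positivity
  obtain ⟨ε₁, hε₁, h₁⟩ := Metric.eventually_nhds_iff.1 hev
  obtain ⟨δ, hδ0, hδ1, hδ2⟩ : ∃ δ : ℝ, 0 < δ ∧ δ ≤ 1 / 10 ∧ 4 * δ < ε₁ :=
    ⟨min (1 / 10) (ε₁ / 8), by positivity, min_le_left _ _, by
      have := min_le_right (1 / 10) (ε₁ / 8); linarith⟩
  let H : A → A := fun a => (1 / 2 : ℂ) • (a + star a)
  have hH : Continuous H := by fun_prop
  have hHE : H (E o) = E o := by
    simp only [H, hEo, ← two_smul ℂ (E o), smul_smul]; norm_num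
  have hev2 : ∀ᶠ a in 𝓝 (E o), ‖H a * H a - H a‖ < δ ∧ ‖H a - E o‖ < δ := by
    refine Filter.Eventually.and ?_ ?_
    · have hc : Continuous fun a => ‖H a * H a - H a‖ := by fun_prop
      refine hc.continuousAt.eventually_lt_const ?_
      simpa [hHE, hEo2] using hδ0
    · have hc : Continuous fun a => ‖H a - E o‖ := by fun_prop
      refine hc.continuousAt.eventually_lt_const ?_
      simpa [hHE] using hδ0
  obtain ⟨ε₂, hε₂, h₂⟩ := Metric.eventually_nhds_iff.1 hev2
  obtain ⟨k, x, hx⟩ := uhf_approx Ak hmono hdense E (min ε₁ ε₂) (lt_min hε₁ hε₂)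
  refine ⟨k, ?_⟩
  obtain ⟨ψ⟩ := hiso k
  have : FiniteDimensional ℂ (Ak k) :=
    Module.Finite.of_surjective (ψ.symm.toStarAlgHom.toAlgHom.toLinearMap :
      Matrix (Fin (n k)) (Fin (n k)) ℂ →ₗ[ℂ] Ak k) (EquivLike.surjective ψ.symm)
  have : IsClosed (Ak k : Set A) :=
    Submodule.closed_of_finiteDimensional (Subalgebra.toSubmodule (Ak k).toSubalgebra)
  obtain ⟨g1, g2⟩ := @h₂ (x o : A) (by
    rw [dist_eq_norm]; exact (hx o).trans_le (min_le_right _ _))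
  let b : Ak k := (1 / 2 : ℂ) • (x o + star (x o))
  have hb : (b : A) = H (x o : A) := rfl
  have hbs : IsSelfAdjoint b := by
    apply Subtype.ext
    change star (H (x o : A)) = H (x o : A)
    simp [H, add_comm]
  obtain ⟨q, hq, hqb⟩ := uhf_proj b hbs δ hδ1 g1.le
  have hqE : ‖(q : A) - E o‖ < ε₁ := by
    have h3 : ‖(q : A) - H (x o : A)‖ ≤ 3 * δ := hqb
    have := norm_sub_le_norm_sub_add_norm_sub (q : A) (H (x o : A)) (E o)
    linarith
  obtain ⟨k1, k2⟩ := @h₁ (fun i => (x i : A), (q : A)) (by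
    rw [Prod.dist_eq, max_lt_iff]
    refine ⟨(dist_pi_lt_iff hε₁).2 fun i => ?_, ?_⟩
    · rw [dist_eq_norm]; exact (hx i).trans_le (min_le_left _ _)
    · rw [dist_eq_norm]; exact hqE)
  refine uhf_count_normed (n k) N (hpos k) ψ q x (fun i => star (x i)) hq ?_ ?_
  · change ‖((∑ i, x i * q * star (x i) - 1 : Ak k) : A)‖ < 1
    simpa using k1
  · intro i j
    have := k2 i j
    change ‖((q * star (x i) * x j * q - (if i = j then q else 0) : Ak k) : A)‖ < _
    split_ifs at this ⊢ <;> simpa using this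
end

section
/- Let A be a unital C*-algebra over ℂ admitting a matricial chain (n_k, A_k). Then for every prime p and every natural number m, the following are equivalent: (i) there exists an injective unital *-algebra homomorphism from M_{p^m}(ℂ) into A; (ii) there exists k such that p^m divides n_k. Consequently, the supernatural number exponent ε_A(p) = sup{m : p^m divides some n_k} (computed in ℕ∞) equals sup{m : M_{p^m}(ℂ) admits an injective unital *-homomorphism into A}, and in particular does not depend on the choice of matricial chain. -/
theorem aux_idem {B : Type*} [CStarAlgebra B] (b : B) (hb : IsSelfAdjoint b)
    (h : ‖b * b - b‖ ≤ 1 / 25) : ∃ q : B, q * q = q ∧ ‖q - b‖ ≤ 2 / 25 := by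
  have key : ∀ x ∈ spectrum ℝ b, |x * x - x| ≤ 1 / 25 := by
    intro x hx
    have h1 : cfc (fun x : ℝ => x * x - x) b = b * b - b := by
      rw [cfc_sub _ _, cfc_mul _ _, cfc_id' ℝ b]
    have h2 := norm_apply_le_norm_cfc (fun x : ℝ => x * x - x) b hx (by fun_prop) hb
    rw [h1] at h2
    exact h2.trans h
  have key2 : ∀ x ∈ spectrum ℝ b, |x| ≤ 2 / 25 ∨ |x - 1| ≤ 2 / 25 := by
    intro x hx
    have h1 := key x hx
    rw [show x * x - x = x * (x - 1) by ring, abs_mul] at h1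
    by_cases hx2 : x ≤ 1 / 2
    · left
      have : 1 / 2 ≤ |x - 1| := by rw [abs_of_nonpos (by linarith)]; linarith
      nlinarith [abs_nonneg x]
    · right
      have : 1 / 2 ≤ |x| := by rw [abs_of_nonneg (by linarith)]; linarith
      nlinarith [abs_nonneg (x - 1)]
  let f : ℝ → ℝ := fun x => if x ≤ 1 / 2 then 0 else 1
  have hf : ContinuousOn f (spectrum ℝ b) := by
    intro x hx
    apply ContinuousAt.continuousWithinAt
    have hne : x ≠ 1 / 2 := by
      rintro rfl
      have := key2 _ hx
      norm_num [abs_le] at this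
    rcases lt_or_gt_of_ne hne with hlt | hgt
    · apply (continuousAt_const (y := (0 : ℝ))).congr
      filter_upwards [Iio_mem_nhds hlt] with y hy
      simp only [f]; rw [if_pos (le_of_lt hy)]
    · apply (continuousAt_const (y := (1 : ℝ))).congr
      filter_upwards [Ioi_mem_nhds hgt] with y hy
      simp only [f]; rw [if_neg (not_le.2 hy)]
  refine ⟨cfc f b, ?_, ?_⟩
  · rw [← cfc_mul f f b hf hf]
    congr 1
    ext x
    simp only [f]; split_ifs <;> simp
  · have : cfc f b - b = cfc (fun x => f x - x) b := by
      rw [cfc_sub f (fun x => x) b hf, cfc_id' ℝ b]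
    rw [this]
    apply norm_cfc_le (by norm_num)
    intro x hx
    rw [Real.norm_eq_abs]
    simp only [f]
    have := key2 x hx
    split_ifs with h1
    · rcases this with h | h
      · simpa using h
      · rw [abs_le] at h; exfalso; linarith [h.1]
    · rcases this with h | h
      · rw [abs_le] at h; exfalso; linarith [h.2]
      · rwa [abs_sub_comm]

theorem aux_trace_unique {n : ℕ} (f : Matrix (Fin n) (Fin n) ℂ →ₗ[ℂ] ℂ)
    (hf : ∀ a b, f (a * b) = f (b * a)) (h1 : f 1 = 1) (a : Matrix (Fin n) (Fin n) ℂ) :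
    (n : ℂ) * f a = a.trace := by
  have hoff : ∀ i j (c : ℂ), i ≠ j → f (Matrix.single i j c) = 0 := by
    intro i j c hij
    have : Matrix.single i j c = Matrix.single i i 1 * Matrix.single i j c := by simp
    rw [this, hf, Matrix.single_mul_single_of_ne _ _ _ _ hij.symm, map_zero]
  have hon : ∀ i j (c : ℂ), f (Matrix.single i i c) = f (Matrix.single j j c) := by
    intro i j c
    have h2 : Matrix.single i i c = Matrix.single i j 1 * Matrix.single j i c := by simp
    rw [h2, hf]; simp
  have hd : ∀ i, (n : ℂ) * f (Matrix.single i i 1) = 1 := by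
    intro i
    have : (1 : Matrix (Fin n) (Fin n) ℂ) = ∑ j, Matrix.single j j 1 := by
      exact Matrix.sum_single_one.symm
    have h3 : f 1 = (n : ℂ) * f (Matrix.single i i 1) := by
      rw [this, map_sum, Finset.sum_congr rfl (fun j _ => hon j i 1), Finset.sum_const,
        Finset.card_univ, Fintype.card_fin, nsmul_eq_mul]
    rw [← h3, h1]
  conv_lhs => rw [Matrix.matrix_eq_sum_single a]
  simp only [map_sum, Finset.mul_sum, Matrix.trace]
  refine Finset.sum_congr rfl fun i _ => ?_
  rw [Finset.sum_eq_single i]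
  · have : Matrix.single i i (a i i) = a i i • Matrix.single i i (1:ℂ) := by simp
    rw [this, map_smul, smul_eq_mul, mul_left_comm, hd]; simp
  · intro j _ hj
    rw [hoff i j _ hj.symm, mul_zero]
  · simp

theorem aux_trace_idem {n : ℕ} (q : Matrix (Fin n) (Fin n) ℂ) (h : q * q = q) :
    ∃ r : ℕ, q.trace = r := by
  have h2 : IsIdempotentElem (Matrix.toLin' q) := by
    rw [IsIdempotentElem, Module.End.mul_eq_comp, ← Matrix.toLin'_mul, h]
  refine ⟨Module.finrank ℂ (LinearMap.range (Matrix.toLin' q)), ?_⟩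
  rw [← LinearMap.IsProj.trace (LinearMap.IsIdempotentElem.isProj_range _ h2),
    Matrix.trace_toLin'_eq]

open scoped Matrix.Norms.L2Operator in
theorem aux_trace_norm {n : ℕ} (a : Matrix (Fin n) (Fin n) ℂ) : ‖a.trace‖ ≤ n * ‖a‖ := by
  rw [Matrix.trace]
  refine (norm_sum_le _ _).trans ?_
  have : ∀ i ∈ Finset.univ, ‖a.diag i‖ ≤ ‖a‖ := by
    intro i _
    have h1 := Matrix.l2_opNorm_mulVec a (EuclideanSpace.single i (1 : ℂ))
    have h2 := PiLp.norm_apply_le (WithLp.toLp 2 (a.mulVec (EuclideanSpace.single i (1 : ℂ)).ofLp) : EuclideanSpace ℂ (Fin n)) i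
    refine le_trans ?_ (h2.trans (h1.trans ?_))
    · simp
    · simp
  refine (Finset.sum_le_card_nsmul _ _ _ this).trans ?_
  simp

open scoped Matrix.Norms.L2Operator in
theorem aux_functional {A : Type*} [CStarAlgebra A] {n : ℕ} (S : StarSubalgebra ℂ A)
    (hn : 0 < n) [IsClosed (S : Set A)] (e : S ≃⋆ₐ[ℂ] Matrix (Fin n) (Fin n) ℂ) :
    ∃ g : StrongDual ℂ A, ‖g‖ ≤ 1 ∧ ∀ x : S, g x = (e x).trace / n := by
  let f0 : S →ₗ[ℂ] ℂ :=
    { toFun := fun x => (e x).trace / n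
      map_add' := by intro x y; simp [add_div]
      map_smul' := by intro c x; simp [mul_div_assoc] }
  have hb : ∀ x : S, ‖f0 x‖ ≤ 1 * ‖x‖ := by
    intro x
    have h1 := aux_trace_norm (e x)
    have h2 : ‖e x‖ ≤ ‖x‖ := NonUnitalStarAlgHom.norm_apply_le e x
    have hn' : (0:ℝ) < n := by exact_mod_cast hn
    change ‖(e x).trace / n‖ ≤ _
    rw [norm_div, Complex.norm_natCast, div_le_iff₀ hn']
    nlinarith
  let f : StrongDual ℂ S := f0.mkContinuous 1 hb
  obtain ⟨g, hg, hg2⟩ := exists_extension_norm_eq (Subalgebra.toSubmodule S.toSubalgebra) f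
  exact ⟨g, hg2.trans_le (f0.mkContinuous_norm_le zero_le_one hb), fun x => hg x⟩

theorem aux_closed {A : Type*} [CStarAlgebra A] {n : ℕ} (S : StarSubalgebra ℂ A)
    (e : S ≃⋆ₐ[ℂ] Matrix (Fin n) (Fin n) ℂ) : IsClosed (S : Set A) := by
  have : FiniteDimensional ℂ (Subalgebra.toSubmodule S.toSubalgebra) :=
    LinearEquiv.finiteDimensional (e.symm.toAlgEquiv.toLinearEquiv : _ ≃ₗ[ℂ] S)
  exact Submodule.closed_of_finiteDimensional (Subalgebra.toSubmodule S.toSubalgebra)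

theorem aux_embed (N d : ℕ) (hd : 0 < d) :
    ∃ φ : Matrix (Fin N) (Fin N) ℂ →⋆ₐ[ℂ] Matrix (Fin (N * d)) (Fin (N * d)) ℂ,
      Function.Injective φ := by
  let F : Matrix (Fin N) (Fin N) ℂ → Matrix (Fin (N * d)) (Fin (N * d)) ℂ := fun a =>
    Matrix.reindexAlgEquiv ℂ ℂ finProdFinEquiv (Matrix.blockDiagonal fun _ : Fin d => a)
  refine ⟨{ toFun := F, map_one' := ?_, map_mul' := ?_, map_zero' := ?_, map_add' := ?_,
            commutes' := ?_, map_star' := ?_ }, ?_⟩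
  · simp only [F]
    rw [show (fun _ : Fin d => (1 : Matrix (Fin N) (Fin N) ℂ)) = 1 from rfl,
      Matrix.blockDiagonal_one, map_one]
  · intro a b
    simp only [F]
    rw [Matrix.blockDiagonal_mul, map_mul]
  · simp only [F]
    rw [show (fun _ : Fin d => (0 : Matrix (Fin N) (Fin N) ℂ)) = 0 from rfl,
      Matrix.blockDiagonal_zero, map_zero]
  · intro a b
    simp only [F]
    rw [← map_add, ← Matrix.blockDiagonal_add]; rfl
  · intro c
    simp only [F]
    rw [Algebra.algebraMap_eq_smul_one, Algebra.algebraMap_eq_smul_one,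
      show (fun _ : Fin d => c • (1 : Matrix (Fin N) (Fin N) ℂ)) = c • 1 from rfl,
      Matrix.blockDiagonal_smul, Matrix.blockDiagonal_one, map_smul, map_one]
  · intro a
    simp only [F, Matrix.star_eq_conjTranspose]
    rw [← Matrix.blockDiagonal_conjTranspose]
    simp
  · intro a b hab
    have h1 := (Matrix.reindexAlgEquiv ℂ ℂ finProdFinEquiv).injective hab
    exact congrFun (Matrix.blockDiagonal_injective h1) ⟨0, hd⟩

theorem aux_tau {A : Type*} [CStarAlgebra A]
    (n : ℕ → ℕ) (Ak : ℕ → StarSubalgebra ℂ A)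
    (hpos : ∀ k, 0 < n k)
    (hmono : ∀ k, Ak k ≤ Ak (k + 1))
    (e : ∀ k, (Ak k) ≃⋆ₐ[ℂ] Matrix (Fin (n k)) (Fin (n k)) ℂ)
    (hdense : Dense (⋃ k, (Ak k : Set A))) :
    ∃ τ : A →ₗ[ℂ] ℂ, (∀ a b, τ (a * b) = τ (b * a)) ∧ τ 1 = 1 := by
  have hcl : ∀ k, IsClosed (Ak k : Set A) := fun k => aux_closed _ (e k)
  have hM : Monotone Ak := monotone_nat_of_le_succ hmono
  choose g hg1 hg2 using fun k => aux_functional (Ak k) (hpos k) (e k)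
  let U : Ultrafilter ℕ := Filter.hyperfilter ℕ
  have hU : ∀ K, ∀ᶠ k in (U : Filter ℕ), K ≤ k := fun K =>
    Nat.hyperfilter_le_atTop (Filter.eventually_ge_atTop K)
  obtain ⟨τ, -, hτ⟩ := (WeakDual.isCompact_closedBall (𝕜 := ℂ) (0 : StrongDual ℂ A) 1).ultrafilter_le_nhds
    (U.map fun k => StrongDual.toWeakDual (g k)) (by
      rw [Filter.le_principal_iff, Ultrafilter.mem_coe, Ultrafilter.mem_map]
      apply Filter.univ_mem'
      intro k
      simpa using hg1 k)
  have hlim : ∀ a : A, Filter.Tendsto (fun k => g k a) U (nhds (τ a)) := by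
    intro a
    have h1 : Filter.Tendsto (fun k => StrongDual.toWeakDual (g k)) U (nhds τ) := hτ
    exact ((WeakDual.eval_continuous a).tendsto τ).comp h1
  have hcont : Continuous τ := τ.cont
  have hcomm1 : ∀ k, ∀ a ∈ Ak k, ∀ b ∈ Ak k, τ (a * b) = τ (b * a) := by
    intro k a ha b hb
    refine tendsto_nhds_unique_of_eventuallyEq (hlim _) (hlim _) ?_
    filter_upwards [hU k] with l hl
    have h1 := hg2 l (⟨a, hM hl ha⟩ * ⟨b, hM hl hb⟩)
    have h2 := hg2 l (⟨b, hM hl hb⟩ * ⟨a, hM hl ha⟩)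
    rw [map_mul, Matrix.trace_mul_comm, ← map_mul, ← h2] at h1
    exact h1
  refine ⟨τ.toLinearMap, ?_, ?_⟩
  · have h2 : ∀ a ∈ (⋃ k, (Ak k : Set A)), ∀ b ∈ (⋃ k, (Ak k : Set A)), τ (a * b) = τ (b * a) := by
      intro a ha b hb
      obtain ⟨i, hi⟩ := Set.mem_iUnion.1 ha
      obtain ⟨j, hj⟩ := Set.mem_iUnion.1 hb
      exact hcomm1 (max i j) a (hM (le_max_left _ _) hi) b (hM (le_max_right _ _) hj)
    have h3 : ∀ a ∈ (⋃ k, (Ak k : Set A)), ∀ b, τ (a * b) = τ (b * a) := by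
      intro a ha b
      have := Continuous.ext_on hdense (f := fun b => τ (a * b)) (g := fun b => τ (b * a))
        (by fun_prop) (by fun_prop) (fun b hb => h2 a ha b hb)
      exact congrFun this b
    intro a b
    have := Continuous.ext_on hdense (f := fun a => τ (a * b)) (g := fun a => τ (b * a))
        (by fun_prop) (by fun_prop) (fun a ha => h3 a ha b)
    exact congrFun this a
  · refine tendsto_nhds_unique_of_eventuallyEq (hlim 1) tendsto_const_nhds ?_
    refine Filter.Eventually.of_forall fun k => ?_
    have h1 := hg2 k 1
    have h0 : (n k : ℂ) ≠ 0 := by exact_mod_cast (hpos k).ne'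
    rw [map_one, Matrix.trace_one, Fintype.card_fin, div_self h0] at h1
    exact h1

theorem aux_near {A : Type*} [CStarAlgebra A] (τ : A →ₗ[ℂ] ℂ) (hτ : ∀ a b, τ (a * b) = τ (b * a))
    (e q : A) (he : e * e = e) (hq : q * q = q) (h : ‖2 * q - 1‖ * ‖e - q‖ < 1) : τ e = τ q := by
  have h1 : ‖1 - (q * e + (1 - q) * (1 - e))‖ < 1 := by
    have h3 : 1 - (q * e + (1 - q) * (1 - e)) = - ((2 * q - 1) * (e - q)) := by
      have : (2 * q - 1) * (e - q) = 2 * (q * e) - 2 * (q * q) - e + q := by noncomm_ring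
      rw [this, hq]; noncomm_ring
    rw [h3, norm_neg]
    exact (norm_mul_le _ _).trans_lt h
  obtain ⟨s, hs⟩ : IsUnit (q * e + (1 - q) * (1 - e)) := by
    have := isUnit_one_sub_of_norm_lt_one h1
    simpa using this
  have h4 : (s : A) * e = q * s := by
    rw [hs]
    have h5 : (q * e + (1 - q) * (1 - e)) * e = q * (e * e) + (1 - q) * (e - e * e) := by
      noncomm_ring
    have h6 : q * (q * e + (1 - q) * (1 - e)) = (q * q) * e + (q - q * q) * (1 - e) := by
      noncomm_ring
    rw [h5, h6, he, hq]; simp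
  have h7 : e = (↑s⁻¹ : A) * (q * s) := by
    rw [← h4, Units.inv_mul_cancel_left]
  rw [h7, hτ, mul_assoc, Units.mul_inv, mul_one]

theorem aux_forward {A : Type*} [CStarAlgebra A]
    (n : ℕ → ℕ) (Ak : ℕ → StarSubalgebra ℂ A)
    (hpos : ∀ k, 0 < n k)
    (hmono : ∀ k, Ak k ≤ Ak (k + 1))
    (e : ∀ k, (Ak k) ≃⋆ₐ[ℂ] Matrix (Fin (n k)) (Fin (n k)) ℂ)
    (hdense : Dense (⋃ k, (Ak k : Set A))) (N : ℕ) (hN : 0 < N)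
    (φ : Matrix (Fin N) (Fin N) ℂ →⋆ₐ[ℂ] A) : ∃ k, N ∣ n k := by
  have hcl : ∀ k, IsClosed (Ak k : Set A) := fun k => aux_closed _ (e k)
  obtain ⟨τ, hτ, hτ1⟩ := aux_tau n Ak hpos hmono e hdense
  let i : Fin N := ⟨0, hN⟩
  let E : Matrix (Fin N) (Fin N) ℂ := Matrix.single i i 1
  have hE1 : E * E = E := by simp [E]
  have hE2 : star E = E := by simp [E, Matrix.star_eq_conjTranspose]
  have hp1 : φ E * φ E = φ E := by rw [← map_mul, hE1]
  have hp2 : star (φ E) = φ E := by rw [← map_star, hE2]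
  have htr : (N : ℂ) * τ (φ E) = 1 := by
    have := aux_trace_unique (τ ∘ₗ φ.toAlgHom.toLinearMap) (fun a b => by simp [hτ])
      (by simpa using hτ1) E
    simpa [E] using this
  generalize φ E = P at hp1 hp2 htr
  have hP : ‖P‖ ≤ 1 := by
    have h1 := CStarRing.norm_star_mul_self (x := P)
    rw [hp2, hp1] at h1
    nlinarith [norm_nonneg P]
  obtain ⟨a, ha, hd⟩ := hdense.exists_dist_lt P (ε := 1 / 100) (by norm_num)
  obtain ⟨k, hk⟩ := Set.mem_iUnion.1 ha
  rw [dist_eq_norm] at hd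
  let b : Ak k := (1 / 2 : ℂ) • (⟨a, hk⟩ + star ⟨a, hk⟩)
  have hb : IsSelfAdjoint b := by
    simp only [b, isSelfAdjoint_iff, star_smul, star_add, star_star]
    rw [add_comm]; simp
  have hbP : ‖(b : A) - P‖ ≤ 1 / 100 := by
    have h1 : (b : A) - P = (1 / 2 : ℂ) • ((a - P) + star (a - P)) := by
      have h2 : (b : A) = (1 / 2 : ℂ) • (a + star a) := rfl
      rw [h2, star_sub, hp2]
      module
    rw [h1, norm_smul]
    have h3 := norm_add_le (a - P) (star (a - P))
    rw [norm_star, norm_sub_rev a P] at h3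
    have h4 : ‖(1 / 2 : ℂ)‖ = 1 / 2 := by norm_num
    rw [h4]
    linarith
  have hbn : ‖(b : A)‖ ≤ 2 := by
    have := norm_add_le ((b : A) - P) P
    rw [sub_add_cancel] at this
    linarith
  have hbb : ‖b * b - b‖ ≤ 1 / 25 := by
    change ‖(b : A) * b - b‖ ≤ 1 / 25
    have h1 : (b : A) * b - b = b * (b - P) + (b - P) * P - (b - P) := by
      have : (b : A) * (b - P) + (b - P) * P - (b - P) = b * b - P * P - b + P := by noncomm_ring
      rw [this, hp1]; noncomm_ring
    rw [h1]
    have h2 := norm_sub_le ((b : A) * (b - P) + (b - P) * P) (b - P)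
    have h3 := norm_add_le ((b : A) * (b - P)) ((b - P) * P)
    have h4 := norm_mul_le (b : A) (b - P)
    have h5 := norm_mul_le ((b : A) - P) P
    have h6 := norm_nonneg ((b : A) - P)
    nlinarith [norm_nonneg P, norm_nonneg (b : A)]
  obtain ⟨q, hq, hqb⟩ := aux_idem b hb hbb
  have hqb' : ‖(q : A) - b‖ ≤ 2 / 25 := hqb
  have hq' : (q : A) * q = q := congrArg Subtype.val hq
  have hqP : ‖P - q‖ ≤ 9 / 100 := by
    have h1 := norm_add_le ((q : A) - b) (b - P)
    rw [sub_add_sub_cancel] at h1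
    rw [norm_sub_rev]; linarith
  have h2q : ‖2 * (q : A) - 1‖ ≤ 4 := by
    have h0 : 2 * (q : A) - 1 = (P - (P - q)) + (P - (P - q)) - 1 := by noncomm_ring
    rw [h0]
    have h1 := norm_sub_le ((P - (P - (q : A))) + (P - (P - q))) 1
    have h2 := norm_add_le (P - (P - (q : A))) (P - (P - q))
    have h3 := norm_sub_le P (P - (q : A))
    have h4 : ‖(1 : A)‖ ≤ 1 := by
      have h1 := CStarRing.norm_star_mul_self (x := (1 : A))
      rw [star_one, one_mul] at h1
      nlinarith [norm_nonneg (1 : A)]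
    linarith
  have hτq := aux_near τ hτ P q hp1 hq' (by nlinarith [norm_nonneg (P - (q : A))])
  obtain ⟨r, hr⟩ := aux_trace_idem (e k q) (by rw [← map_mul, hq])
  have huniq := aux_trace_unique
    (τ ∘ₗ (Ak k).subtype.toAlgHom.toLinearMap ∘ₗ (e k).symm.toAlgEquiv.toLinearMap)
    (fun a b => by simp [hτ]) (by simpa using hτ1) (e k q)
  rw [hr] at huniq
  have huniq' : (n k : ℂ) * τ q = r := by simpa using huniq
  refine ⟨k, r, ?_⟩
  have : (n k : ℂ) = N * r := by
    rw [← huniq', ← hτq, mul_left_comm, htr, mul_one]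
  exact_mod_cast this

/-- For a unital C*-algebra `A` with a matricial chain `(n k, Ak k)` and a prime
`p`: `M_{p^m}(ℂ)` unitally *-embeds into `A` iff `p^m ∣ n k` for some `k`; consequently the
supernatural number exponent `ε_A(p)` (a supremum in `ℕ∞`) is chain-independent, being equal to
the supremum of those `m` for which `M_{p^m}(ℂ)` embeds into `A`. -/
theorem uhf_supernatural_number_well_defined
    {A : Type*} [CStarAlgebra A]
    (n : ℕ → ℕ) (Ak : ℕ → StarSubalgebra ℂ A)
    (hpos : ∀ k, 0 < n k)
    (hmono : ∀ k, Ak k ≤ Ak (k + 1))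
    (hiso : ∀ k, Nonempty ((Ak k) ≃⋆ₐ[ℂ] Matrix (Fin (n k)) (Fin (n k)) ℂ))
    (hdense : Dense (⋃ k, (Ak k : Set A)))
    (p : ℕ) (hp : p.Prime) :
    (∀ m : ℕ,
      (∃ φ : Matrix (Fin (p ^ m)) (Fin (p ^ m)) ℂ →⋆ₐ[ℂ] A, Function.Injective φ) ↔
        (∃ k, p ^ m ∣ n k)) ∧
    (⨆ m ∈ {m : ℕ | ∃ k, p ^ m ∣ n k}, (m : ℕ∞)) =
      ⨆ m ∈ {m : ℕ |
        ∃ φ : Matrix (Fin (p ^ m)) (Fin (p ^ m)) ℂ →⋆ₐ[ℂ] A, Function.Injective φ}, (m : ℕ∞) := by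
  have key : ∀ m : ℕ,
      (∃ φ : Matrix (Fin (p ^ m)) (Fin (p ^ m)) ℂ →⋆ₐ[ℂ] A, Function.Injective φ) ↔
        (∃ k, p ^ m ∣ n k) := by
    intro m
    constructor
    · rintro ⟨φ, -⟩
      exact aux_forward n Ak hpos hmono (fun k => (hiso k).some) hdense _ (pow_pos hp.pos m) φ
    · rintro ⟨k, d, hd⟩
      obtain ⟨e⟩ := hiso k
      have hk := hpos k
      rw [hd] at e hk
      obtain ⟨ψ, hψ⟩ := aux_embed (p ^ m) d (Nat.pos_of_mul_pos_left hk)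
      refine ⟨(Ak k).subtype.comp ((e.symm : _ →⋆ₐ[ℂ] Ak k).comp ψ), ?_⟩
      exact Subtype.val_injective.comp (e.symm.injective.comp hψ)
  refine ⟨key, ?_⟩
  simp only [Set.mem_ofPred_eq, key]
end

section
/- Let A be a unital C*-algebra over ℂ admitting a matricial chain (n_k, A_k), and let τ be a tracial state on A. If p and q are projections in A with τ(p) = τ(q), then p and q are Murray–von Neumann equivalent, i.e., there exists v ∈ A with p = v·star(v) and q = star(v)·v. -/
lemma mvn_of_norm_lt_one {A : Type*} [CStarAlgebra A] (p q : A)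
    (hp : star p = p ∧ p * p = p) (hq : star q = q ∧ q * q = q) (h : ‖p - q‖ < 1) :
    ∃ v : A, p = v * star v ∧ q = star v * v := by
  obtain ⟨hp1, hp2⟩ := hp
  obtain ⟨hq1, hq2⟩ := hq
  set w : A := 1 - (p - q) * (p - q) with hw
  have hwsa : IsSelfAdjoint w := by
    simp [IsSelfAdjoint, hw, hp1, hq1]
  have hwe : w = 1 - p - q + p * q + q * p := by
    rw [hw]; simp only [mul_sub, sub_mul, hp2, hq2]; abel
  have hpw : p * w = p * q * p := by
    rw [hwe]
    simp only [mul_add, mul_sub, mul_one, ← mul_assoc, hp2]; abel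
  have hwp : w * p = p * q * p := by
    rw [hwe]
    simp only [add_mul, sub_mul, one_mul, mul_assoc, hp2]; abel
  have hqw : q * w = q * p * q := by
    rw [hwe]
    simp only [mul_add, mul_sub, mul_one, ← mul_assoc, hq2]; abel
  have hwq : w * q = q * p * q := by
    rw [hwe]
    simp only [add_mul, sub_mul, one_mul, mul_assoc, hq2]; abel
  have hspec : ∀ x ∈ spectrum ℝ w, 0 < x := by
    intro x hx
    have h1 : (1 - x) ∈ spectrum ℝ ((p - q) * (p - q)) := by
      have e : (p - q) * (p - q) = algebraMap ℝ A 1 - w := by simp [hw]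
      rw [e, ← spectrum.singleton_sub_eq]
      exact ⟨1, rfl, x, hx, rfl⟩
    have h2 := spectrum.norm_le_norm_mul_of_mem h1
    have h3 : ‖(p - q) * (p - q)‖ < 1 := by
      refine (norm_mul_le _ _).trans_lt ?_
      nlinarith [norm_nonneg (p - q)]
    have h4 : ‖(1 : A)‖ ≤ 1 := by
      have := IsStarProjection.norm_le (1 : A) (IsStarProjection.one A)
      exact this
    rw [Real.norm_eq_abs] at h2
    have := le_abs_self (1 - x)
    nlinarith [norm_nonneg ((p - q) * (p - q))]
  have hcont : ContinuousOn (fun x : ℝ => (√x)⁻¹) (spectrum ℝ w) := by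
    apply ContinuousOn.inv₀ (Real.continuous_sqrt.continuousOn)
    intro x hx
    exact (Real.sqrt_pos.2 (hspec x hx)).ne'
  set g : A := cfc (fun x : ℝ => (√x)⁻¹) w with hg
  have hgsa : star g = g := (cfc_predicate (fun x : ℝ => (√x)⁻¹) w : IsSelfAdjoint _)
  have hwgg : w * (g * g) = 1 := by
    have e1 : g * g = cfc (fun x : ℝ => (√x)⁻¹ * (√x)⁻¹) w := (cfc_mul _ _ w hcont hcont).symm
    have e2 : w * (g * g) = cfc (fun x : ℝ => x * ((√x)⁻¹ * (√x)⁻¹)) w := by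
      rw [e1, cfc_mul (fun x : ℝ => x) (fun x : ℝ => (√x)⁻¹ * (√x)⁻¹) w continuousOn_id (hcont.mul hcont), cfc_id' ℝ w]
    rw [e2, ← cfc_one ℝ w]
    apply cfc_congr
    intro x hx
    have hx0 := hspec x hx
    simp only [Pi.one_apply]
    rw [← mul_inv, Real.mul_self_sqrt hx0.le, mul_inv_cancel₀ hx0.ne']
  have hgp : g * p = p * g := Commute.cfc_real (show w * p = p * w by rw [hpw, hwp]) _
  have hgq : g * q = q * g := Commute.cfc_real (show w * q = q * w by rw [hqw, hwq]) _
  refine ⟨p * q * g, ?_, ?_⟩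
  · simp only [star_mul, hp1, hq1, hgsa]
    calc p = p * w * (g * g) := by rw [mul_assoc, hwgg, mul_one]
      _ = p * (q * q) * p * (g * g) := by rw [hpw, hq2]
      _ = p * q * g * (g * (q * p)) := by
        have : g * (g * (q * p)) = q * p * (g * g) := by
          rw [← mul_assoc g q p, hgq, mul_assoc q g p, hgp, ← mul_assoc g q, hgq]
          simp only [mul_assoc]
          rw [← mul_assoc g p, hgp, mul_assoc]
        rw [mul_assoc (p * q) g, this]; simp only [mul_assoc]
  · simp only [star_mul, hp1, hq1, hgsa]
    calc q = q * w * (g * g) := by rw [mul_assoc, hwgg, mul_one]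
      _ = q * (p * p) * q * (g * g) := by rw [hqw, hp2]
      _ = g * (q * p) * (p * q * g) := by
        have : g * (q * p) = q * p * g := by
          rw [← mul_assoc, hgq, mul_assoc, hgp, mul_assoc]
        rw [this]
        have : g * (p * q * g) = p * q * (g * g) := by
          rw [← mul_assoc, ← mul_assoc, hgp, mul_assoc p, hgq]; simp only [mul_assoc]
        rw [mul_assoc (q * p) g, this]; simp only [mul_assoc]

lemma mvn_trans {A : Type*} [Ring A] [StarRing A] (p q r : A) (hp : p * p = p) (hr : r * r = r)
    (h1 : ∃ v : A, p = v * star v ∧ q = star v * v)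
    (h2 : ∃ v : A, q = v * star v ∧ r = star v * v) :
    ∃ v : A, p = v * star v ∧ r = star v * v := by
  obtain ⟨u, hu1, hu2⟩ := h1
  obtain ⟨v, hv1, hv2⟩ := h2
  refine ⟨u * v, ?_, ?_⟩
  · rw [star_mul]
    calc p = p * p := hp.symm
      _ = u * (star u * u) * star u := by nth_rw 1 2 [hu1]; simp only [mul_assoc]
      _ = u * (v * star v) * star u := by rw [← hu2, hv1]
      _ = _ := by simp only [mul_assoc]
  · rw [star_mul]
    calc r = r * r := hr.symm
      _ = star v * (v * star v) * v := by nth_rw 1 2 [hv2]; simp only [mul_assoc]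
      _ = star v * (star u * u) * v := by rw [← hv1, hu2]
      _ = _ := by simp only [mul_assoc]

lemma exists_proj_near {A : Type*} [CStarAlgebra A] (S : StarSubalgebra ℂ A)
    (hS : IsClosed (S : Set A)) (p : A) (hp : star p = p ∧ p * p = p)
    (b : A) (hb : b ∈ S) (hbp : ‖b - p‖ < 1 / 16) :
    ∃ e ∈ S, (star e = e ∧ e * e = e) ∧ ‖p - e‖ < 1 := by
  obtain ⟨hp1, hp2⟩ := hp
  have hpn : ‖p‖ ≤ 1 := IsStarProjection.norm_le p ⟨hp2, hp1⟩
  set a : A := (1 / 2 : ℂ) • (b + star b) with ha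
  have haS : a ∈ S := S.smul_mem (add_mem hb (star_mem hb)) _
  have hasa : IsSelfAdjoint a := by
    rw [IsSelfAdjoint, ha, star_smul, star_add, star_star, add_comm]; simp
  set d : A := a - p with hd
  have hdn : ‖d‖ < 1 / 16 := by
    have e : d = (1 / 2 : ℂ) • ((b - p) + star (b - p)) := by
      rw [hd, ha, star_sub, hp1]; module
    rw [e, norm_smul]
    have := norm_add_le (b - p) (star (b - p))
    rw [norm_star] at this
    have h2 : ‖(1 / 2 : ℂ)‖ = 1 / 2 := by norm_num
    rw [h2]
    linarith
  have hn : ‖a * a - a‖ < 1 / 5 := by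
    have e : a * a - a = p * d + d * p + d * d - d := by
      have : a = p + d := by rw [hd]; abel
      rw [this]; simp only [mul_add, add_mul, hp2]; abel
    rw [e]
    have h1 := norm_sub_le (p * d + d * p + d * d) d
    have h2 := norm_add_le (p * d + d * p) (d * d)
    have h3 := norm_add_le (p * d) (d * p)
    have h4 := norm_mul_le p d
    have h5 := norm_mul_le d p
    have h6 := norm_mul_le d d
    nlinarith [norm_nonneg d, norm_nonneg p]
  have hspec : ∀ x ∈ spectrum ℝ a, |x * x - x| < 1 / 5 := by
    have e : a * a - a = cfc (fun x : ℝ => x * x - x) a := by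
      rw [cfc_sub (fun x : ℝ => x * x) (fun x => x) a, cfc_mul (fun x : ℝ => x) (fun x => x) a,
        cfc_id' ℝ a]
    rw [e] at hn
    intro x hx
    have := (norm_cfc_le_iff (fun x : ℝ => x * x - x) a (norm_nonneg _)).1 le_rfl x hx
    exact this.trans_lt hn
  let f : ℝ → ℝ := fun x => if x < 1 / 2 then 0 else 1
  have hf : ContinuousOn f (spectrum ℝ a) := by
    intro x hx
    apply ContinuousAt.continuousWithinAt
    have hx2 := abs_lt.1 (hspec x hx)
    rcases lt_trichotomy x (1 / 2) with h | h | h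
    · refine (continuousAt_const (y := (0 : ℝ))).congr ?_
      filter_upwards [eventually_lt_nhds h] with y hy
      simp only [f]; rw [if_pos hy]
    · exfalso; subst h; norm_num at hx2
    · refine (continuousAt_const (y := (1 : ℝ))).congr ?_
      filter_upwards [eventually_gt_nhds h] with y hy
      simp only [f]; rw [if_neg (not_lt.2 hy.le)]
  have hff : ∀ x ∈ spectrum ℝ a, ‖f x - x‖ ≤ 1 / 3 := by
    intro x hx
    have hx2 := abs_lt.1 (hspec x hx)
    simp only [f]
    rw [Real.norm_eq_abs, abs_le]
    split_ifs with h
    · constructor <;> nlinarith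
    · constructor <;> nlinarith
  haveI := hS
  refine ⟨cfc f a, ?_, ⟨?_, ?_⟩, ?_⟩
  · have hc : IsClosed ((S : StarSubalgebra ℂ A) : Set A) := hS
    exact cfc_mem (𝕜 := ℝ) (𝕜' := ℂ) (hs := hc) f haS
  · exact (cfc_predicate f a : IsSelfAdjoint _)
  · rw [← cfc_mul f f a]
    congr 1
    ext x
    simp only [f]; split_ifs <;> simp
  · have e : cfc f a - a = cfc (fun x => f x - x) a := by
      rw [cfc_sub f (fun x => x) a, cfc_id' ℝ a]
    have h1 : ‖cfc f a - a‖ ≤ 1 / 3 := by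
      rw [e]; exact norm_cfc_le (by norm_num) hff
    have h2 : p - cfc f a = -(d + (cfc f a - a)) := by rw [hd]; abel
    rw [h2, norm_neg]
    have := norm_add_le d (cfc f a - a)
    linarith

lemma tracial_matrix {n : ℕ} (t : Matrix (Fin n) (Fin n) ℂ →ₗ[ℂ] ℂ)
    (ht : ∀ a b, t (a * b) = t (b * a)) (M : Matrix (Fin n) (Fin n) ℂ) :
    (n : ℂ) * t M = M.trace * t 1 := by
  have h1 : ∑ i, ∑ j, Matrix.single i j (1 : ℂ) * M * Matrix.single j i (1 : ℂ)
      = M.trace • (1 : Matrix (Fin n) (Fin n) ℂ) := by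
    have : ∀ i j : Fin n, Matrix.single i j (1 : ℂ) * M * Matrix.single j i (1 : ℂ)
        = M j j • Matrix.single i i (1 : ℂ) := by
      intro i j
      rw [Matrix.single_mul_mul_single]; simp
    simp_rw [this, ← Finset.sum_smul, ← Finset.smul_sum, Matrix.sum_single_one]
    rfl
  have h2 := congrArg t h1
  rw [map_smul, smul_eq_mul] at h2
  rw [← h2, map_sum]
  simp_rw [map_sum]
  have : ∀ i j, t (Matrix.single i j (1 : ℂ) * M * Matrix.single j i (1 : ℂ))
      = t (M * Matrix.single j j (1 : ℂ)) := by
    intro i j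
    rw [mul_assoc, ht, mul_assoc, Matrix.single_mul_single_same, one_mul]
  simp_rw [this, ← map_sum t, ← Finset.mul_sum, Matrix.sum_single_one]
  rw [Finset.sum_const, mul_smul_comm, map_nsmul, mul_one]
  simp

lemma proj_eigen {n : ℕ} (e : Matrix (Fin n) (Fin n) ℂ) (he : star e = e ∧ e * e = e) :
    ∃ (U : Matrix (Fin n) (Fin n) ℂ) (s : Finset (Fin n)), star U * U = 1 ∧
      e = U * Matrix.diagonal (fun i => if i ∈ s then (1 : ℂ) else 0) * star U ∧
      e.trace = s.card := by
  have hH : e.IsHermitian := he.1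
  have hs := hH.spectral_theorem
  rw [Unitary.conjStarAlgAut_apply] at hs
  set U : Matrix (Fin n) (Fin n) ℂ := (hH.eigenvectorUnitary : Matrix (Fin n) (Fin n) ℂ) with hU
  have hUU : star U * U = 1 := Unitary.coe_star_mul_self hH.eigenvectorUnitary
  set D := Matrix.diagonal ((RCLike.ofReal : ℝ → ℂ) ∘ hH.eigenvalues) with hD
  have hDe : D = star U * e * U := by
    rw [hs]
    calc D = (star U * U) * D * (star U * U) := by rw [hUU, one_mul, mul_one]
      _ = _ := by simp only [mul_assoc]
  have hDD : D * D = D := by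
    have hUU' : U * star U = 1 := mul_eq_one_comm.1 hUU
    calc D * D = star U * e * (U * star U) * e * U := by rw [hDe]; simp only [mul_assoc]
      _ = star U * (e * e) * U := by rw [hUU']; simp only [mul_assoc, mul_one, one_mul]
      _ = D := by rw [he.2, hDe]
  have h01 : ∀ i, D i i = 0 ∨ D i i = 1 := by
    intro i
    have := congrFun (congrFun hDD i) i
    rw [hD, Matrix.diagonal_mul_diagonal, Matrix.diagonal_apply_eq, Matrix.diagonal_apply_eq] at this
    rw [hD, Matrix.diagonal_apply_eq]
    exact IsIdempotentElem.iff_eq_zero_or_one.1 this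
  let s : Finset (Fin n) := Finset.univ.filter (fun i => D i i = 1)
  have hDs : D = Matrix.diagonal (fun i => if i ∈ s then (1 : ℂ) else 0) := by
    ext i j
    by_cases hij : i = j
    · subst hij
      rw [Matrix.diagonal_apply_eq]
      rcases h01 i with h | h <;> simp [s, h]
    · rw [Matrix.diagonal_apply_ne _ hij, hD, Matrix.diagonal_apply_ne _ hij]
  refine ⟨U, s, hUU, ?_, ?_⟩
  · rw [← hDs]; exact hs
  · rw [hs, Matrix.trace_mul_comm, ← mul_assoc, hUU, one_mul]
    change D.trace = _
    rw [hDs, Matrix.trace_diagonal]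
    simp

lemma mvn_matrix {n : ℕ} (e f : Matrix (Fin n) (Fin n) ℂ) (he : star e = e ∧ e * e = e)
    (hf : star f = f ∧ f * f = f) (h : e.trace = f.trace) :
    ∃ v, e = v * star v ∧ f = star v * v := by
  obtain ⟨U, s, hU, hes, hec⟩ := proj_eigen e he
  obtain ⟨W, t, hW, hft, hfc⟩ := proj_eigen f hf
  have hc : s.card = t.card := by rw [hec, hfc] at h; exact_mod_cast h
  -- partial permutation matrix
  let σ : Equiv.Perm (Fin n) := (Finset.equivOfCardEq hc).extendSubtype
  have hσ : ∀ i, σ i ∈ t ↔ i ∈ s := by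
    intro i
    by_cases hi : i ∈ s
    · exact iff_of_true ((Finset.equivOfCardEq hc).extendSubtype_mem i hi) hi
    · exact iff_of_false ((Finset.equivOfCardEq hc).extendSubtype_not_mem i hi) hi
  set Ds : Matrix (Fin n) (Fin n) ℂ := Matrix.diagonal (fun i => if i ∈ s then (1 : ℂ) else 0) with hDs
  set W' : Matrix (Fin n) (Fin n) ℂ := W.submatrix id σ with hW'
  have hW'1 : star W' * W' = 1 := by
    have : star W' * W' = (star W * W).submatrix σ σ := by
      ext i j; simp [hW', Matrix.mul_apply]
    rw [this, hW]; simp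
  have hfW : f = W' * Ds * star W' := by
    rw [hft]
    ext i j
    rw [Matrix.mul_apply, Matrix.mul_apply, ← Equiv.sum_comp σ]
    refine Finset.sum_congr rfl fun l _ => ?_
    rw [hDs, Matrix.mul_diagonal, Matrix.mul_diagonal]
    simp [hW', hσ]
  have hDst : star Ds = Ds := by
    rw [hDs, Matrix.star_eq_conjTranspose, Matrix.diagonal_conjTranspose]
    congr 1
    ext i
    simp only [Pi.star_apply]
    split_ifs <;> simp
  have hDD : Ds * Ds = Ds := by
    rw [hDs, Matrix.diagonal_mul_diagonal]
    congr 1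
    ext i
    split_ifs <;> simp
  refine ⟨U * Ds * star W', ?_, ?_⟩
  · rw [star_mul, star_mul, star_star, hDst]
    calc e = U * (Ds * Ds) * star U := by rw [hDD, hes]
      _ = U * Ds * (star W' * W') * Ds * star U := by rw [hW'1]; simp only [mul_assoc, mul_one, one_mul]
      _ = _ := by simp only [mul_assoc]
  · rw [star_mul, star_mul, star_star, hDst]
    calc f = W' * (Ds * Ds) * star W' := by rw [hDD, hfW]
      _ = W' * Ds * (star U * U) * Ds * star W' := by rw [hU]; simp only [mul_assoc, mul_one, one_mul]
      _ = _ := by simp only [mul_assoc]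


/-- In a unital C*-algebra admitting a matricial chain (i.e. a UHF algebra),
any two projections with the same value under a tracial state are Murray–von Neumann
equivalent. -/
theorem uhf_trace_factor_like
    {A : Type*} [CStarAlgebra A]
    (n : ℕ → ℕ) (Ak : ℕ → StarSubalgebra ℂ A)
    (hpos : ∀ k, 0 < n k)
    (hmono : ∀ k, Ak k ≤ Ak (k + 1))
    (hiso : ∀ k, Nonempty ((Ak k) ≃⋆ₐ[ℂ] Matrix (Fin (n k)) (Fin (n k)) ℂ))
    (hdense : Dense (⋃ k, (Ak k : Set A)))
    (τ : A →ₗ[ℂ] ℂ)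
    (hτ1 : τ 1 = 1)
    (hτtr : ∀ a b : A, τ (a * b) = τ (b * a))
    (hτpos : ∀ a : A, ∃ r : ℝ, 0 ≤ r ∧ τ (star a * a) = (r : ℂ))
    (p q : A)
    (hp : star p = p ∧ p * p = p)
    (hq : star q = q ∧ q * q = q)
    (hτpq : τ p = τ q) :
    ∃ v : A, p = v * star v ∧ q = star v * v := by
  have hmon : Monotone Ak := monotone_nat_of_le_succ hmono
  have hcl : ∀ k, IsClosed ((Ak k : StarSubalgebra ℂ A) : Set A) := by
    intro k
    obtain ⟨φ⟩ := hiso k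
    let ψ : (Ak k) ≃ₗ[ℂ] Matrix (Fin (n k)) (Fin (n k)) ℂ :=
      { toFun := φ, invFun := φ.symm, map_add' := map_add φ, map_smul' := fun c x => map_smul φ c x,
        left_inv := φ.symm_apply_apply, right_inv := φ.apply_symm_apply }
    have : FiniteDimensional ℂ (Ak k) := Module.Finite.equiv ψ.symm
    exact Submodule.closed_of_finiteDimensional (Subalgebra.toSubmodule (Ak k).toSubalgebra)
  have happ : ∀ r : A, (star r = r ∧ r * r = r) →
      ∃ k, ∃ e ∈ Ak k, (star e = e ∧ e * e = e) ∧ ‖r - e‖ < 1 := by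
    intro r hr
    obtain ⟨b, hb, hbr⟩ := Metric.dense_iff.1 hdense r (1 / 16) (by norm_num)
    obtain ⟨k, hk⟩ := Set.mem_iUnion.1 hbr
    rw [Metric.mem_ball, dist_eq_norm] at hb
    exact ⟨k, exists_proj_near (Ak k) (hcl k) r hr b hk hb⟩
  have hτmvn : ∀ a b : A, (∃ v : A, a = v * star v ∧ b = star v * v) → τ a = τ b := by
    rintro a b ⟨v, rfl, rfl⟩
    exact hτtr _ _
  obtain ⟨k₁, e, hek, he, hpe⟩ := happ p hp
  obtain ⟨k₂, f, hfk, hf, hqf⟩ := happ q hq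
  have h1 := mvn_of_norm_lt_one p e hp he hpe
  have h2 := mvn_of_norm_lt_one f q hf hq (by rwa [norm_sub_rev])
  have hef : τ e = τ f := by rw [← hτmvn p e h1, hτmvn f q h2, hτpq]
  let k := max k₁ k₂
  have hek' : e ∈ Ak k := hmon (le_max_left _ _) hek
  have hfk' : f ∈ Ak k := hmon (le_max_right _ _) hfk
  obtain ⟨φ⟩ := hiso k
  have hmid : ∃ v : A, e = v * star v ∧ f = star v * v := by
    let E : Ak k := ⟨e, hek'⟩
    let F : Ak k := ⟨f, hfk'⟩
    have hE : star E = E ∧ E * E = E := ⟨Subtype.ext he.1, Subtype.ext he.2⟩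
    have hF : star F = F ∧ F * F = F := ⟨Subtype.ext hf.1, Subtype.ext hf.2⟩
    let t : Matrix (Fin (n k)) (Fin (n k)) ℂ →ₗ[ℂ] ℂ :=
      { toFun := fun M => τ (φ.symm M : A)
        map_add' := fun M N => by simp
        map_smul' := fun c M => by simp [map_smul] }
    have ht : ∀ M N, t (M * N) = t (N * M) := by
      intro M N
      simp only [t, LinearMap.coe_mk, AddHom.coe_mk, map_mul]
      exact hτtr _ _
    have ht1 : t 1 = 1 := by
      simp only [t, LinearMap.coe_mk, AddHom.coe_mk, map_one]
      exact hτ1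
    have htE : t (φ E) = τ e := by simp [t, E]
    have htF : t (φ F) = τ f := by simp [t, F]
    have htr : (φ E).trace = (φ F).trace := by
      have a1 := tracial_matrix t ht (φ E)
      have a2 := tracial_matrix t ht (φ F)
      rw [ht1, mul_one] at a1 a2
      rw [← a1, ← a2, htE, htF, hef]
    obtain ⟨v, hv1, hv2⟩ := mvn_matrix (φ E) (φ F)
      ⟨by rw [← map_star, hE.1], by rw [← map_mul, hE.2]⟩
      ⟨by rw [← map_star, hF.1], by rw [← map_mul, hF.2]⟩ htr
    refine ⟨(φ.symm v : A), ?_, ?_⟩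
    · have : E = φ.symm v * star (φ.symm v) := by
        rw [← map_star, ← map_mul, ← hv1, φ.symm_apply_apply]
      exact congrArg Subtype.val this
    · have : F = star (φ.symm v) * φ.symm v := by
        rw [← map_star, ← map_mul, ← hv2, φ.symm_apply_apply]
      exact congrArg Subtype.val this
  exact mvn_trans p f q hp.2 hq.2 (mvn_trans p e f hp.2 hf.2 h1 hmid) h2
end

section
/- Let A be a unital C*-algebra over ℂ admitting a matricial chain. Suppose M is a *-subalgebra of A that is *-isomorphic (as a ℂ-star-algebra) to a full matrix algebra M_d(ℂ) for some d ≥ 1, and let v_1, …, v_k ∈ A and ε > 0. Then there exist n ≥ 1 and a closed unital *-subalgebra B of A (with 1_A ∈ B) such that M ⊆ B, B is *-isomorphic to M_n(ℂ), and the distance (Metric.infDist) from each v_i to B is less than ε. -/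
open Filter Topology

section UHFHelpers
variable {A : Type*} [CStarAlgebra A]

/-- inverse square root via functional calculus -/
noncomputable def invSqrt (z : A) : A := cfc (fun x : ℝ => (√x)⁻¹) z

lemma invSqrt_selfAdjoint (z : A) : star (invSqrt z) = invSqrt z :=
  (cfc_predicate (p := IsSelfAdjoint) (fun x : ℝ => (√x)⁻¹) z)

lemma spec_bound {z : A} {x : ℝ}
    (hx : x ∈ spectrum ℝ z) : |x - 1| ≤ ‖z - 1‖ := by
  rcases subsingleton_or_nontrivial A with hA | hA
  · exact absurd hx (by simp [spectrum.of_subsingleton])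
  have h1 : x - 1 ∈ spectrum ℝ (z - 1) := by
    have := spectrum.sub_singleton_eq (R := ℝ) z 1
    rw [map_one] at this
    rw [← this]
    exact Set.sub_mem_sub hx rfl
  exact spectrum.norm_le_norm_of_mem h1

lemma spec_pos {z : A} (h : ‖z - 1‖ ≤ 1 / 2) {x : ℝ}
    (hx : x ∈ spectrum ℝ z) : 1 / 2 ≤ x := by
  have := abs_le.1 (spec_bound hx)
  linarith [this.1]

lemma invSqrt_cont {z : A} (h : ‖z - 1‖ ≤ 1 / 2) :
    ContinuousOn (fun x : ℝ => (√x)⁻¹) (spectrum ℝ z) := by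
  apply ContinuousOn.inv₀ (by fun_prop)
  intro x hx
  have := spec_pos h hx
  positivity

lemma invSqrt_mul {z : A} (hz : IsSelfAdjoint z) (h : ‖z - 1‖ ≤ 1 / 2) :
    invSqrt z * z * invSqrt z = 1 := by
  have hc := invSqrt_cont h
  have hid : cfc (fun x : ℝ => x) z = z := cfc_id' ℝ z
  unfold invSqrt
  nth_rewrite 2 [← hid]
  rw [← cfc_mul _ _ z hc, ← cfc_mul (fun x : ℝ => (√x)⁻¹ * x) _ z (hc.mul continuousOn_id) hc, ← cfc_one ℝ z]
  apply cfc_congr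
  intro x hx
  have := spec_pos h hx
  have h2 : √x * √x = x := Real.mul_self_sqrt (by linarith)
  have h3 : 0 < √x := Real.sqrt_pos.2 (by linarith)
  simp only [Pi.one_apply]
  field_simp
  nlinarith

lemma invSqrt_norm {z : A} (hz : IsSelfAdjoint z) (h : ‖z - 1‖ ≤ 1 / 2) :
    ‖invSqrt z - 1‖ ≤ ‖z - 1‖ := by
  have hc := invSqrt_cont h
  unfold invSqrt
  rw [← cfc_one ℝ z, ← cfc_sub _ _ z hc (by fun_prop)]
  refine norm_cfc_le (norm_nonneg _) ?_
  intro x hx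
  rw [cfc_one ℝ z]
  have h0 := spec_pos h hx
  refine le_trans ?_ (spec_bound hx)
  have h2 : √x * √x = x := Real.mul_self_sqrt (by linarith)
  have h3 : 0 < √x := Real.sqrt_pos.2 (by linarith)
  have h4 : 1 / 2 ≤ √x := by nlinarith
  have h5 : x - 1 = (√x)⁻¹ - 1 - ((√x)⁻¹ - 1) * (1 + √x * (1 + √x)) := by
    field_simp; nlinarith
  have h6 : x - 1 = - (((√x)⁻¹ - 1) * (√x * (1 + √x))) := by rw [h5]; ring
  have h7 : 1 ≤ √x * (1 + √x) := by nlinarith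
  simp only [Pi.one_apply, Real.norm_eq_abs]
  rw [h6, abs_neg, abs_mul, abs_of_pos (by positivity : 0 < √x * (1 + √x))]
  exact le_mul_of_one_le_right (abs_nonneg _) h7

lemma invSqrt_commute {z b : A} (h : Commute z b) :
    Commute (invSqrt z) b := h.cfc_real _

lemma invSqrt_mem {z : A} {S : StarSubalgebra ℂ A}
    (hS : IsClosed (S : Set A)) (h : z ∈ S) : invSqrt z ∈ S :=
  cfc_mem (𝕜' := ℂ) (hs := hS) _ h

lemma invSqrt_tendsto {z : ℕ → A} (hz : ∀ k, IsSelfAdjoint (z k))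
    (h : Tendsto z atTop (𝓝 1)) : Tendsto (fun k => invSqrt (z k)) atTop (𝓝 1) := by
  rw [tendsto_iff_norm_sub_tendsto_zero] at h ⊢
  refine squeeze_zero' (Eventually.of_forall fun _ => norm_nonneg _) ?_ h
  filter_upwards [h.eventually_le_const (by norm_num : (0:ℝ) < 1 / 2)] with k hk
  exact invSqrt_norm (hz k) hk

lemma invSqrt_event {z : ℕ → A} (hz : ∀ k, IsSelfAdjoint (z k))
    (h : Tendsto z atTop (𝓝 1)) : 
    ∀ᶠ k in atTop, invSqrt (z k) * z k * invSqrt (z k) = 1 := by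
  rw [tendsto_iff_norm_sub_tendsto_zero] at h
  filter_upwards [h.eventually_le_const (by norm_num : (0:ℝ) < 1 / 2)] with k hk
  exact invSqrt_mul (hz k) hk

lemma chain_approx (S : ℕ → StarSubalgebra ℂ A) (hmono : Monotone S)
    (hdense : Dense (⋃ k, (S k : Set A))) (a : A) :
    ∃ x : ℕ → A, (∀ k, x k ∈ S k) ∧ Tendsto x atTop (𝓝 a) := by
  have h1 : ∀ k : ℕ, ∃ y ∈ S k, dist a y < Metric.infDist a (S k : Set A) + 1 / ((k : ℝ) + 1) := by
    intro k
    have : (S k : Set A).Nonempty := ⟨1, one_mem (S k)⟩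
    exact (Metric.infDist_lt_iff this).1 (lt_add_of_pos_right _ Nat.one_div_pos_of_nat)
  choose x hx hx2 using h1
  refine ⟨x, hx, ?_⟩
  have h2 : Tendsto (fun k => Metric.infDist a (S k : Set A)) atTop (𝓝 0) := by
    rw [Metric.tendsto_atTop]
    intro e he
    obtain ⟨y, hy, hy2⟩ := Metric.dense_iff.1 hdense a e he
    obtain ⟨N, hN⟩ := Set.mem_iUnion.1 hy2
    refine ⟨N, fun k hk => ?_⟩
    rw [Real.dist_0_eq_abs, abs_of_nonneg Metric.infDist_nonneg]
    refine lt_of_le_of_lt (Metric.infDist_le_dist_of_mem (hmono hk hN)) ?_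
    rw [dist_comm]; exact hy
  have h3 := h2.add (tendsto_one_div_add_atTop_nhds_zero_nat (𝕜 := ℝ))
  rw [add_zero] at h3
  rw [tendsto_iff_dist_tendsto_zero]
  refine squeeze_zero (fun _ => dist_nonneg) (fun k => ?_) h3
  rw [dist_comm]; exact (hx2 k).le

lemma matrix_closed (S : StarSubalgebra ℂ A) {N : ℕ}
    (f : S ≃⋆ₐ[ℂ] Matrix (Fin N) (Fin N) ℂ) : IsClosed (S : Set A) := by
  have : FiniteDimensional ℂ S :=
    Module.Finite.equiv (f.toAlgEquiv.toLinearEquiv.symm)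
  have : FiniteDimensional ℂ (Subalgebra.toSubmodule S.toSubalgebra) := this
  exact Submodule.closed_of_finiteDimensional (Subalgebra.toSubmodule S.toSubalgebra)

lemma small_idem_zero {ι : Type*} [Fintype ι] (r : ι → ι → A)
    (hr : ∀ i k, r i k = ∑ j, r i j * r j k)
    (hs : ∑ i, ∑ j, ‖r i j‖ < 1) : ∀ i j, r i j = 0 := by
  set s := ∑ i, ∑ j, ‖r i j‖ with hsdef
  have h1 : ∀ i k, ‖r i k‖ ≤ (∑ j, ‖r i j‖) * (∑ j, ‖r j k‖) := by
    intro i k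
    calc ‖r i k‖ = ‖∑ j, r i j * r j k‖ := by rw [← hr]
      _ ≤ ∑ j, ‖r i j‖ * ‖r j k‖ :=
        (norm_sum_le _ _).trans (Finset.sum_le_sum fun j _ => norm_mul_le _ _)
      _ ≤ ∑ j, ‖r i j‖ * ∑ l, ‖r l k‖ := by
        gcongr with j
        exact Finset.single_le_sum (f := fun l => ‖r l k‖) (fun l _ => norm_nonneg _)
          (Finset.mem_univ j)
      _ = _ := by rw [Finset.sum_mul]
  have h2 : s ≤ s * s := by
    calc s ≤ ∑ i, ∑ k, (∑ j, ‖r i j‖) * (∑ j, ‖r j k‖) :=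
        Finset.sum_le_sum fun i _ => Finset.sum_le_sum fun k _ => h1 i k
      _ = s * s := by
        rw [← Finset.sum_mul_sum, Finset.sum_comm (f := fun k j => ‖r j k‖)]
  have h0 : 0 ≤ s := by positivity
  have h3 : s = 0 := by nlinarith
  intro i j
  have h4 := (Finset.sum_eq_zero_iff_of_nonneg (fun i _ => by positivity)).1 h3 i (Finset.mem_univ _)
  have h5 := (Finset.sum_eq_zero_iff_of_nonneg (fun i _ => by positivity)).1 h4 j (Finset.mem_univ _)
  exact norm_eq_zero.1 h5


/-- projections in the chain converging to a given projection -/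
lemma exists_proj (S : ℕ → StarSubalgebra ℂ A) (hmono : Monotone S)
    (hcl : ∀ k, IsClosed (S k : Set A))
    (hdense : Dense (⋃ k, (S k : Set A))) (e : A) (he : star e = e) (hee : e * e = e) :
    ∃ p : ℕ → A, (∀ k, p k ∈ S k) ∧ Tendsto p atTop (𝓝 e) ∧ (∀ k, star (p k) = p k) ∧
      ∀ᶠ k in atTop, p k * p k = p k := by
  obtain ⟨x, hxm, hx⟩ := chain_approx S hmono hdense (e + e - 1)
  set w : ℕ → A := fun k => (1 / 2 : ℂ) • (x k + star (x k)) with hw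
  have hwm : ∀ k, w k ∈ S k := fun k =>
    (S k).smul_mem (add_mem (hxm k) (star_mem (hxm k))) _
  have hws : ∀ k, star (w k) = w k := by
    intro k
    simp [hw, add_comm]
  have half : ∀ a : A, (1 / 2 : ℂ) • (a + a) = a := by
    intro a
    rw [← two_smul ℂ a, smul_smul]; norm_num
  have hwt : Tendsto w atTop (𝓝 (e + e - 1)) := by
    have := (hx.add hx.star).const_smul (1 / 2 : ℂ)
    have h2 : star (e + e - 1) = e + e - 1 := by simp [he]
    rwa [h2, half] at this
  have hz : ∀ k, IsSelfAdjoint (w k * w k) := by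
    intro k
    rw [isSelfAdjoint_iff, star_mul, hws]
  have hzt : Tendsto (fun k => w k * w k) atTop (𝓝 1) := by
    have := hwt.mul hwt
    have h2 : (e + e - 1) * (e + e - 1) = 1 := by
      simp only [mul_add, mul_sub, add_mul, sub_mul, hee, one_mul, mul_one]; abel
    rwa [h2] at this
  have hct := invSqrt_tendsto hz hzt
  have hce := invSqrt_event hz hzt
  have hcomm : ∀ k, Commute (invSqrt (w k * w k)) (w k) := fun k =>
    invSqrt_commute ((Commute.refl (w k)).mul_left (Commute.refl (w k)))
  set q : ℕ → A := fun k => invSqrt (w k * w k) * w k with hq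
  have hqt : Tendsto q atTop (𝓝 (e + e - 1)) := by
    have := hct.mul hwt
    rwa [one_mul] at this
  refine ⟨fun k => (1 / 2 : ℂ) • (1 + q k), ?_, ?_, ?_, ?_⟩
  · intro k
    exact (S k).smul_mem (add_mem (one_mem _)
      (mul_mem (invSqrt_mem (hcl k) (mul_mem (hwm k) (hwm k))) (hwm k))) _
  · have := (hqt.const_add 1).const_smul (1 / 2 : ℂ)
    have h2 : 1 + (e + e - 1) = e + e := by abel
    rwa [h2, half] at this
  · intro k
    have : star (q k) = q k := by
      simp only [hq, star_mul, hws, invSqrt_selfAdjoint]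
      exact (hcomm k).symm.eq
    simp [this]
  · filter_upwards [hce] with k hk
    have : q k * q k = 1 := by
      calc q k * q k = invSqrt (w k * w k) * w k * (invSqrt (w k * w k) * w k) := rfl
        _ = invSqrt (w k * w k) * w k * (w k * invSqrt (w k * w k)) := by rw [(hcomm k).eq]
        _ = 1 := by rw [← hk]; simp only [mul_assoc]
    rw [smul_mul_smul_comm]
    have h2 : (1 + q k) * (1 + q k) = (1 + q k) + (1 + q k) := by
      simp only [mul_add, add_mul, this, one_mul, mul_one]; abel
    rw [h2, ← smul_smul, half]

/-- the columns of matrix units in the chain -/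
lemma exists_columns (S : ℕ → StarSubalgebra ℂ A) (hmono : Monotone S)
    (hcl : ∀ k, IsClosed (S k : Set A))
    (hdense : Dense (⋃ k, (S k : Set A))) {ι : Type*} [Fintype ι] [DecidableEq ι]
    (e : ι → ι → A) (i₀ : ι)
    (hmul : ∀ i j k l, e i j * e k l = if j = k then e i l else 0)
    (hstar : ∀ i j, star (e i j) = e j i) (hsum : ∑ i, e i i = 1) :
    ∃ (p : ℕ → A) (v : ι → ℕ → A), (∀ i k, v i k ∈ S k) ∧
      (∀ i, Tendsto (v i) atTop (𝓝 (e i i₀))) ∧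
      ∀ᶠ k in atTop, (∀ i, v i k * p k = v i k) ∧
        ∀ i j, star (v i k) * v j k = if i = j then p k else 0 := by
  obtain ⟨p, hpm, hpt, hps, hpp⟩ := exists_proj S hmono hcl hdense (e i₀ i₀) (hstar _ _)
    (by simp [hmul])
  choose x hxm hxt using fun i => chain_approx S hmono hdense (e i i₀)
  set y : ι → ℕ → A := fun i k => x i k * p k with hy
  have hym : ∀ i k, y i k ∈ S k := fun i k => mul_mem (hxm i k) (hpm k)
  have hyt : ∀ i, Tendsto (y i) atTop (𝓝 (e i i₀)) := by
    intro i
    have := (hxt i).mul hpt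
    rwa [hmul, if_pos rfl] at this
  set z : ℕ → A := fun k => ∑ i, y i k * star (y i k) with hzdef
  have hz : ∀ k, IsSelfAdjoint (z k) := by
    intro k
    simp [isSelfAdjoint_iff, hzdef]
  have hzt : Tendsto z atTop (𝓝 1) := by
    have := tendsto_finsetSum Finset.univ (fun i _ => (hyt i).mul (hyt i).star)
    simpa only [hstar, hmul, if_true, hsum] using this
  have hct := invSqrt_tendsto hz hzt
  have hce := invSqrt_event hz hzt
  set v : ι → ℕ → A := fun i k => invSqrt (z k) * y i k with hv
  have hvt : ∀ i, Tendsto (v i) atTop (𝓝 (e i i₀)) := by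
    intro i
    have := hct.mul (hyt i)
    rwa [one_mul] at this
  refine ⟨p, v, ?_, hvt, ?_⟩
  · intro i k
    exact mul_mem (invSqrt_mem (hcl k)
      (sum_mem fun i _ => mul_mem (hym i k) (star_mem (hym i k)))) (hym i k)
  have hr0 : Tendsto (fun k => ∑ i, ∑ j, ‖(if i = j then p k else 0) - star (v i k) * v j k‖)
      atTop (𝓝 0) := by
    have h1 : ∀ i j, Tendsto (fun k => ‖(if i = j then p k else 0) - star (v i k) * v j k‖)
        atTop (𝓝 0) := by
      intro i j
      have h2 : Tendsto (fun k => if i = j then p k else 0) atTop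
          (𝓝 (if i = j then e i₀ i₀ else 0)) := by
        split_ifs
        · exact hpt
        · exact tendsto_const_nhds
      have h3 := (h2.sub ((hvt i).star.mul (hvt j))).norm
      simpa only [hstar, hmul, sub_self, norm_zero] using h3
    have := tendsto_finsetSum Finset.univ (fun i _ =>
      tendsto_finsetSum Finset.univ (fun j _ => h1 i j))
    simpa using this
  filter_upwards [hpp, hce, hr0.eventually_lt_const zero_lt_one] with k hpk hck hrk
  have hvp : ∀ i, v i k * p k = v i k := by
    intro i
    simp only [hv, hy, mul_assoc, hpk]
  have hpv : ∀ i, p k * star (v i k) = star (v i k) := by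
    intro i
    have := congrArg star (hvp i)
    rwa [star_mul, hps] at this
  refine ⟨hvp, ?_⟩
  have hvv : ∑ i, v i k * star (v i k) = 1 := by
    rw [← hck, hzdef]
    simp only [Finset.mul_sum, Finset.sum_mul]
    refine Finset.sum_congr rfl fun i _ => ?_
    simp only [hv, star_mul, invSqrt_selfAdjoint, mul_assoc]
    rfl
  have hz0 := small_idem_zero (fun i j => (if i = j then p k else 0) - star (v i k) * v j k) ?_ hrk
  · intro i j
    exact (sub_eq_zero.1 (hz0 i j)).symm
  · intro i l
    have h1 : ∑ j, star (v i k) * v j k * (star (v j k) * v l k) = star (v i k) * v l k := by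
      calc _ = star (v i k) * (∑ j, v j k * star (v j k)) * v l k := by
            simp only [Finset.mul_sum, Finset.sum_mul, mul_assoc]
        _ = _ := by rw [hvv, mul_one]
    simp only [mul_sub, sub_mul, Finset.sum_sub_distrib, ite_mul, mul_ite, zero_mul, mul_zero,
      Finset.sum_ite_eq, Finset.sum_ite_eq', Finset.mem_univ, if_true, hpk, mul_assoc, hvp]
    simp only [← mul_assoc] at h1
    simp only [← mul_assoc, hpv, h1]
    abel

/-- unitaries converging to one and conjugating the matrix units into the chain -/
lemma exists_unitaries (S : ℕ → StarSubalgebra ℂ A) (hmono : Monotone S)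
    (hcl : ∀ k, IsClosed (S k : Set A))
    (hdense : Dense (⋃ k, (S k : Set A))) {ι : Type*} [Fintype ι] [DecidableEq ι]
    (e : ι → ι → A) (i₀ : ι)
    (hmul : ∀ i j k l, e i j * e k l = if j = k then e i l else 0)
    (hstar : ∀ i j, star (e i j) = e j i) (hsum : ∑ i, e i i = 1) :
    ∃ u : ℕ → A, Tendsto u atTop (𝓝 1) ∧
      ∀ᶠ k in atTop, u k ∈ unitary A ∧ ∀ i j, u k * e i j * star (u k) ∈ S k := by
  obtain ⟨p, v, hvm, hvt, hev⟩ := exists_columns S hmono hcl hdense e i₀ hmul hstar hsum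
  set s : ℕ → A := fun k => ∑ i, v i k * e i₀ i with hs
  have hst : Tendsto s atTop (𝓝 1) := by
    have := tendsto_finsetSum Finset.univ (fun i _ => (hvt i).mul_const (e i₀ i))
    simpa only [hmul, if_true, hsum] using this
  have hz : ∀ k, IsSelfAdjoint (star (s k) * s k) := fun k => IsSelfAdjoint.star_mul_self _
  have hzt : Tendsto (fun k => star (s k) * s k) atTop (𝓝 1) := by
    have := hst.star.mul hst
    rwa [star_one, one_mul] at this
  have hct := invSqrt_tendsto hz hzt
  have hce := invSqrt_event hz hzt
  set u : ℕ → A := fun k => s k * invSqrt (star (s k) * s k) with hu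
  have hut : Tendsto u atTop (𝓝 1) := by
    have := hst.mul hct
    rwa [one_mul] at this
  have hunit : ∀ᶠ k in atTop, IsUnit (u k) :=
    hut.eventually (Units.isOpen.mem_nhds isUnit_one)
  refine ⟨u, hut, ?_⟩
  filter_upwards [hev, hce, hunit] with k hk hck huk
  obtain ⟨hvp, hvv⟩ := hk
  have h1 : star (u k) * u k = 1 := by
    simp only [hu, star_mul, invSqrt_selfAdjoint]
    rw [← hck]; simp only [mul_assoc]
  have h2 : u k * star (u k) = 1 := by
    have := huk.mul_left_inj.1 (show (u k * star (u k)) * u k = 1 * u k by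
      rw [mul_assoc, h1, mul_one, one_mul])
    exact this
  refine ⟨Unitary.mem_iff.2 ⟨h1, h2⟩, ?_⟩
  have hse : ∀ i j, s k * e i j = (v i k * star (v j k)) * s k := by
    intro i j
    simp only [hs, Finset.sum_mul, Finset.mul_sum]
    have h3 : ∀ l, v l k * e i₀ l * e i j = if l = i then v i k * e i₀ j else 0 := by
      intro l
      rw [mul_assoc, hmul]
      split_ifs with h
      · rw [h]
      · simp
    have h4 : ∀ l, v i k * star (v j k) * (v l k * e i₀ l) =
        if j = l then v i k * e i₀ j else 0 := by
      intro l
      have : v i k * star (v j k) * (v l k * e i₀ l) =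
        v i k * (star (v j k) * v l k) * e i₀ l := by simp only [mul_assoc]
      rw [this, hvv]
      split_ifs with h
      · rw [hvp, h]
      · simp
    simp only [h3, h4]
    simp
  have hes : ∀ i j, e i j * star (s k) = star (s k) * (v i k * star (v j k)) := by
    intro i j
    have := congrArg star (hse j i)
    simpa [hstar] using this
  intro i j
  have hcomm : Commute (invSqrt (star (s k) * s k)) (e i j) := by
    apply invSqrt_commute
    show star (s k) * s k * e i j = e i j * (star (s k) * s k)
    rw [mul_assoc, hse, ← mul_assoc, ← hes, mul_assoc]
  have : u k * e i j * star (u k) = v i k * star (v j k) := by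
    have h5 : u k * e i j = v i k * star (v j k) * u k := by
      calc u k * e i j = s k * (invSqrt (star (s k) * s k) * e i j) := by
            simp only [hu, mul_assoc]
        _ = (s k * e i j) * invSqrt (star (s k) * s k) := by rw [hcomm.eq, mul_assoc]
        _ = _ := by rw [hse]; simp only [hu, mul_assoc]
    rw [h5, mul_assoc, h2, mul_one]
  rw [this]
  exact mul_mem (hvm i k) (star_mem (hvm j k))

end UHFHelpers

/-- In a unital C*-algebra admitting a matricial chain (i.e. a UHF algebra), any
finite-dimensional *-subalgebra `M` isomorphic to a full matrix algebra can be enlarged to a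
closed unital *-subalgebra `B ⊇ M` isomorphic to a full matrix algebra that approximately
contains any prescribed finite family of elements. -/
theorem uhf_matrix_subalgebra_extension
    {A : Type*} [CStarAlgebra A]
    (n : ℕ → ℕ) (Ak : ℕ → StarSubalgebra ℂ A)
    (hpos : ∀ k, 0 < n k)
    (hmono : ∀ k, Ak k ≤ Ak (k + 1))
    (hiso : ∀ k, Nonempty ((Ak k) ≃⋆ₐ[ℂ] Matrix (Fin (n k)) (Fin (n k)) ℂ))
    (hdense : Dense (⋃ k, (Ak k : Set A)))
    (M : StarSubalgebra ℂ A) (d : ℕ) (hd : 1 ≤ d)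
    (hM : Nonempty (M ≃⋆ₐ[ℂ] Matrix (Fin d) (Fin d) ℂ))
    (k : ℕ) (v : Fin k → A) (ε : ℝ) (hε : 0 < ε) :
    ∃ (m : ℕ) (B : StarSubalgebra ℂ A), 1 ≤ m ∧
      IsClosed (B : Set A) ∧ M ≤ B ∧
      Nonempty (B ≃⋆ₐ[ℂ] Matrix (Fin m) (Fin m) ℂ) ∧
      ∀ i, Metric.infDist (v i) (B : Set A) < ε := by
  obtain ⟨f⟩ := hM
  have hmono' : Monotone Ak := monotone_nat_of_le_succ hmono
  have hcl : ∀ k, IsClosed (Ak k : Set A) := fun k => matrix_closed _ (hiso k).some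
  set g : Matrix (Fin d) (Fin d) ℂ →⋆ₐ[ℂ] A :=
    M.subtype.comp (f.symm : Matrix (Fin d) (Fin d) ℂ →⋆ₐ[ℂ] M) with hg
  set e : Fin d → Fin d → A := fun i j => g (Matrix.single i j 1) with he
  obtain ⟨u, hut, hev⟩ := exists_unitaries Ak hmono' hcl hdense e ⟨0, hd⟩
    (by
      intro i j k l
      simp only [he, ← map_mul]
      split_ifs with h
      · subst h; simp
      · rw [Matrix.single_mul_single_of_ne _ _ _ _ h, map_zero])
    (by
      intro i j
      simp only [he, ← map_star]
      rw [Matrix.star_eq_conjTranspose, Matrix.conjTranspose_single, star_one])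
    (by
      simp only [he, ← map_sum]
      rw [Matrix.sum_single_one, map_one])
  choose a ham hat using fun i => chain_approx Ak hmono' hdense (v i)
  have hdist : ∀ᶠ N in atTop, ∀ i, dist (star (u N) * a i N * u N) (v i) < ε := by
    rw [eventually_all]
    intro i
    have := (hut.star.mul (hat i)).mul hut
    rw [star_one, one_mul, mul_one] at this
    exact this.eventually (Metric.ball_mem_nhds _ hε)
  obtain ⟨N, ⟨huN, hmem⟩, hN⟩ := (hev.and hdist).exists
  set U : unitary A := ⟨u N, huN⟩ with hU
  obtain ⟨φ⟩ := hiso N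
  set c : A →⋆ₐ[ℂ] A := (Unitary.conjStarAlgAut ℂ A (star U) : A →⋆ₐ[ℂ] A) with hc
  have hcapp : ∀ x, c x = star (u N) * x * u N := by
    intro x
    simp [hc, hU]
  set ψ : Matrix (Fin (n N)) (Fin (n N)) ℂ →⋆ₐ[ℂ] A :=
    (c.comp (Ak N).subtype).comp (φ.symm : Matrix (Fin (n N)) (Fin (n N)) ℂ →⋆ₐ[ℂ] Ak N) with hψ
  have hψapp : ∀ x, ψ x = star (u N) * (φ.symm x : A) * u N := fun x => hcapp _
  have hinj : Function.Injective ψ := by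
    intro x y hxy
    rw [hψapp, hψapp] at hxy
    have h1 : ∀ b : A, u N * (star (u N) * b * u N) * star (u N) = b := by
      intro b
      calc _ = (u N * star (u N)) * b * (u N * star (u N)) := by simp only [mul_assoc]
        _ = b := by rw [Unitary.mul_star_self_of_mem huN, one_mul, mul_one]
    have h2 := congrArg (fun b => u N * b * star (u N)) hxy
    simp only [h1] at h2
    exact φ.symm.injective (Subtype.ext h2)
  have hrange : ∀ b ∈ Ak N, star (u N) * b * u N ∈ ψ.range := by
    intro b hb
    refine ⟨φ ⟨b, hb⟩, ?_⟩
    show ψ _ = _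
    rw [hψapp]; simp
  have hequiv := (StarAlgEquiv.ofInjective ψ hinj).symm
  refine ⟨n N, ψ.range, hpos N, matrix_closed _ hequiv, ?_, ⟨hequiv⟩, ?_⟩
  · intro x hx
    have h1 : x = g (f ⟨x, hx⟩) := by simp [hg]
    rw [h1, Matrix.matrix_eq_sum_single (f ⟨x, hx⟩), map_sum]
    refine sum_mem fun i _ => ?_
    rw [map_sum]
    refine sum_mem fun j _ => ?_
    have h2 : Matrix.single i j (f ⟨x, hx⟩ i j) = (f ⟨x, hx⟩ i j) • Matrix.single i j (1 : ℂ) := by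
      simp
    rw [h2, map_smul]
    refine ψ.range.smul_mem ?_ _
    have h3 := hrange _ (hmem i j)
    have h4 : star (u N) * (u N * e i j * star (u N)) * u N = e i j := by
      calc _ = (star (u N) * u N) * e i j * (star (u N) * u N) := by simp only [mul_assoc]
        _ = _ := by rw [Unitary.star_mul_self_of_mem huN, one_mul, mul_one]
    rwa [h4] at h3
  · intro i
    refine lt_of_le_of_lt (Metric.infDist_le_dist_of_mem (hrange _ (ham i N))) ?_
    rw [dist_comm]
    exact hN i
end

section
/- For every n ≥ 1 and every ε > 0 there exists δ > 0 with the following property: for every unital C*-algebra A and every family (a_{r,s})_{r,s ∈ Fin n} of elements of A satisfying ‖star(a_{r,s}) − a_{s,r}‖ < δ, ‖a_{r,s}·a_{r',s'} − (if s = r' then a_{r,s'} else 0)‖ < δ, ‖a_{r,s}‖ < 1 + δ for all indices, and ‖1_A − Σ_r a_{r,r}‖ < δ, there exists an n×n system of matrix units (b_{r,s})_{r,s ∈ Fin n} in A with Σ_r b_{r,r} = 1_A and ‖a_{r,s} − b_{r,s}‖ < ε for all r, s. (That is, the relations defining an n×n system of matrix units whose diagonal sums to the unit are weakly stable, uniformly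 over all unital C*-algebras.) -/
namespace MUWS

/-- bump function around the integer `r` -/
noncomputable def bump (r : ℕ) (t : ℝ) : ℝ := max 0 (min 1 (2 - 4 * |t - r|))

lemma bump_cont (r : ℕ) : Continuous (bump r) := by
  unfold bump; fun_prop

lemma bump_one {r : ℕ} {t : ℝ} (h : |t - r| < 1/4) : bump r t = 1 := by
  unfold bump
  rw [min_eq_left (by linarith)]; norm_num

lemma bump_zero {r s : ℕ} {t : ℝ} (h : |t - s| < 1/4) (hrs : r ≠ s) : bump r t = 0 := by
  unfold bump
  have h1 : (1:ℝ) ≤ |(r:ℝ) - s| := by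
    have h2 : (1:ℤ) ≤ |(r:ℤ) - s| := Int.one_le_abs (by omega)
    exact_mod_cast h2
  have h2 : |(r:ℝ) - s| ≤ |t - r| + |t - s| := by
    have := abs_sub_le (r:ℝ) t s
    rwa [abs_sub_comm (r:ℝ) t] at this
  apply max_eq_left
  apply (min_le_right _ _).trans
  linarith

lemma far {r s : ℕ} {t : ℝ} (h : |t - s| < 1/4) (hrs : r ≠ s) : 3/4 ≤ |t - r| := by
  have h1 : (1:ℝ) ≤ |(r:ℝ) - s| := by
    have h2 : (1:ℤ) ≤ |(r:ℤ) - s| := Int.one_le_abs (by omega)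
    exact_mod_cast h2
  have h2 : |(r:ℝ) - s| ≤ |t - r| + |t - s| := by
    have := abs_sub_le (r:ℝ) t s
    rwa [abs_sub_comm (r:ℝ) t] at this
  linarith

lemma spec_proj {A : Type*} [CStarAlgebra A] {n : ℕ} (h : A) (hh : IsSelfAdjoint h)
    (hs : ∀ t ∈ spectrum ℝ h, ∃ r : Fin n, |t - (r : ℕ)| < 1/4) :
    ∃ p : Fin n → A, (∀ r, star (p r) = p r) ∧
      (∀ r s, p r * p s = if r = s then p r else 0) ∧ (∑ r, p r = 1) ∧
      (∀ r, ‖p r‖ ≤ 1) ∧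
      (∀ r s, r ≠ s → ∃ g : A, ‖g‖ ≤ 4 ∧ p s = g * (h - algebraMap ℝ A (r : ℕ))) := by
  refine ⟨fun r => cfc (bump r) h, fun r => (IsSelfAdjoint.cfc).star_eq, ?_, ?_, ?_, ?_⟩
  · intro r s
    dsimp only
    rw [← cfc_mul _ _ _ (bump_cont r).continuousOn (bump_cont s).continuousOn]
    split_ifs with hrs
    · subst hrs
      apply cfc_congr
      intro t ht
      obtain ⟨q, hq⟩ := hs t ht
      by_cases hqr : (r : ℕ) = q
      · have := bump_one (hqr ▸ hq); simp [this]
      · simp [bump_zero hq hqr]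
    · rw [← cfc_const_zero (R := ℝ) h]
      apply cfc_congr
      intro t ht
      obtain ⟨q, hq⟩ := hs t ht
      by_cases hqr : (r : ℕ) = q
      · have : (s : ℕ) ≠ q := by
          rw [← hqr]; intro h; exact hrs (Fin.ext h.symm)
        simp [bump_zero hq this]
      · simp [bump_zero hq hqr]
  · rw [← cfc_sum_univ (fun r : Fin n => bump r) h (fun i => (bump_cont i).continuousOn),
      ← cfc_const_one ℝ h]
    apply cfc_congr
    intro t ht
    obtain ⟨q, hq⟩ := hs t ht
    simp only [Finset.sum_apply]
    rw [Finset.sum_eq_single q]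
    · exact bump_one hq
    · intro b _ hb
      exact bump_zero hq (fun h => hb (Fin.ext h))
    · simp
  · intro r
    apply norm_cfc_le zero_le_one
    intro t ht
    unfold bump
    rw [Real.norm_eq_abs, abs_of_nonneg (le_max_left _ _)]
    exact max_le zero_le_one (min_le_left _ _)
  · intro r s hrs
    have hrs' : (r : ℕ) ≠ s := fun h => hrs (Fin.ext h)
    have hc : Continuous (fun t : ℝ => bump s t * ((t - (r:ℕ)) / max ((t - (r:ℕ))^2) (1/4))) := by
      apply (bump_cont s).mul
      apply Continuous.div (by fun_prop) (by fun_prop)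
      intro t
      have : (1/4 : ℝ) ≤ max ((t - (r:ℕ))^2) (1/4) := le_max_right _ _
      linarith
    refine ⟨cfc (fun t : ℝ => bump s t * ((t - (r:ℕ)) / max ((t - (r:ℕ))^2) (1/4))) h, ?_, ?_⟩
    · apply norm_cfc_le (by norm_num)
      intro t ht
      obtain ⟨q, hq⟩ := hs t ht
      by_cases hqs : (s : ℕ) = q
      · have h1 := far hq (hqs ▸ hrs')
        have h2 : (1/4 : ℝ) ≤ (t - (r:ℕ))^2 := by rw [← sq_abs]; nlinarith
        rw [max_eq_left h2, bump_one (hqs ▸ hq), one_mul, Real.norm_eq_abs, abs_div, abs_pow,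
          div_le_iff₀ (by positivity)]
        nlinarith
      · simp [bump_zero hq hqs]
    · have e : h - algebraMap ℝ A (r : ℕ) = cfc (fun t : ℝ => t - (r:ℕ)) h := by
        rw [cfc_sub (fun t : ℝ => t) (fun _ => ((r:ℕ):ℝ)) h, cfc_id' ℝ h, cfc_const _ h]
      rw [e, ← cfc_mul _ _ _ hc.continuousOn (by fun_prop)]
      apply cfc_congr
      intro t ht
      obtain ⟨q, hq⟩ := hs t ht
      by_cases hqs : (s : ℕ) = q
      · have h1 := far hq (hqs ▸ hrs')
        have h2 : (1/4 : ℝ) ≤ (t - (r:ℕ))^2 := by rw [← sq_abs]; nlinarith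
        have h3 : t - (r:ℕ) ≠ 0 := by intro h; rw [h] at h2; norm_num at h2
        simp only
        rw [max_eq_left h2, bump_one (hqs ▸ hq)]
        field_simp
      · simp [bump_zero hq hqs]

lemma proj_zero {A : Type*} [CStarAlgebra A] (e : A) (h1 : star e = e) (h2 : e * e = e)
    (h3 : ‖e‖ < 1) : e = 0 := by
  have := CStarRing.norm_star_mul_self (x := e)
  rw [h1, h2] at this
  rw [← norm_eq_zero]
  nlinarith [norm_nonneg e]

lemma polar {A : Type*} [CStarAlgebra A] (p q x : A) (ν : ℝ) (hp : star p = p) (hp2 : p * p = p)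
    (hq : star q = q) (hq2 : q * q = q) (hxp : x * p = x) (hqx : q * x = x)
    (hx : ‖x‖ ≤ 2) (h1 : ‖star x * x - p‖ ≤ ν) (h2 : ‖x * star x - q‖ ≤ ν) (hν : 13 * ν < 1) :
    ∃ v : A, star v * v = p ∧ v * star v = q ∧ v * p = v ∧ q * v = v ∧ ‖v - x‖ ≤ 2 * ν := by
  have hν0 : 0 ≤ ν := (norm_nonneg _).trans h1
  have hpx : p * star x = star x := by rw [← hp, ← star_mul, hxp]
  set y : A := star x * x + 1 - p with hy
  have hysa : IsSelfAdjoint y := by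
    rw [isSelfAdjoint_iff, hy]; simp [hp]
  have hpy : Commute y p := by
    rw [commute_iff_eq, hy]
    simp only [add_mul, sub_mul, mul_add, mul_sub, hp2, one_mul, mul_one]
    rw [mul_assoc, hxp, ← mul_assoc, hpx]
  have hspec : ∀ t ∈ spectrum ℝ y, |t - 1| ≤ ν := by
    intro t ht
    have := norm_apply_le_norm_cfc (fun t : ℝ => t - 1) y ht (by fun_prop) hysa
    rw [cfc_sub (fun t : ℝ => t) (fun _ => (1:ℝ)) y, cfc_id' ℝ y, cfc_const_one ℝ y] at this
    rw [← Real.norm_eq_abs]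
    refine this.trans ?_
    have e : y - 1 = star x * x - p := by rw [hy]; abel
    rwa [e]
  set k : ℝ → ℝ := fun t => (Real.sqrt (max t (1/2)))⁻¹ with hk
  have hpos : ∀ t : ℝ, 0 < Real.sqrt (max t (1/2)) := fun t =>
    Real.sqrt_pos.2 (lt_of_lt_of_le (by norm_num) (le_max_right _ _))
  have hkc : Continuous k := by
    apply Continuous.inv₀ (by fun_prop)
    intro t; exact (hpos t).ne'
  set w : A := cfc k y with hw
  have hwsa : star w = w := (IsSelfAdjoint.cfc).star_eq
  have hwp : Commute w p := hpy.cfc_real k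
  have hwyw : w * y * w = 1 := by
    conv_lhs => rw [hw, ← cfc_id' ℝ y, cfc_id' ℝ y]
    nth_rewrite 2 [← cfc_id' ℝ y]
    rw [← cfc_mul _ _ _ hkc.continuousOn (by fun_prop),
      ← cfc_mul _ _ _ (by fun_prop) hkc.continuousOn, ← cfc_const_one ℝ y]
    apply cfc_congr
    intro t ht
    have h3 := abs_le.1 (hspec t ht)
    have h4 : max t (1/2) = t := max_eq_left (by linarith)
    have h5 := hpos t
    have h6 := Real.sq_sqrt (show 0 ≤ t by linarith)
    simp only [hk]
    rw [h4] at h5 ⊢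
    field_simp
    linarith
  have hw1 : ‖w - 1‖ ≤ ν := by
    rw [hw, ← cfc_const_one ℝ y, ← cfc_sub _ _ _ hkc.continuousOn (by fun_prop)]
    apply norm_cfc_le hν0
    intro t ht
    have h3 := hspec t ht
    have h3' := abs_le.1 h3
    have h4 : max t (1/2) = t := max_eq_left (by linarith)
    have h5 := hpos t
    simp only [hk]
    rw [h4] at h5 ⊢
    refine le_trans ?_ h3
    have h6 := Real.sq_sqrt (show 0 ≤ t by linarith)
    set u := Real.sqrt t
    have h7 : 1/2 ≤ u := by nlinarith
    have e : u⁻¹ - 1 = (1 - u) / u := by field_simp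
    rw [e, Real.norm_eq_abs, abs_div, abs_of_pos h5, div_le_iff₀ h5, ← h6]
    have e2 : u^2 - 1 = -((1 - u) * (1 + u)) := by ring
    rw [e2, abs_neg, abs_mul, abs_of_pos (show 0 < 1 + u by linarith), mul_assoc]
    apply le_mul_of_one_le_right (abs_nonneg _)
    nlinarith
  have hvx : ‖x * w - x‖ ≤ 2 * ν := by
    have : x * w - x = x * (w - 1) := by noncomm_ring
    rw [this]
    exact (norm_mul_le _ _).trans (mul_le_mul hx hw1 (norm_nonneg _) (by norm_num))
  have hvv : star (x * w) * (x * w) = p := by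
    have e : star x * x = y * p := by
      rw [hy]; simp only [add_mul, sub_mul, hp2, one_mul]; rw [mul_assoc, hxp]; abel
    calc star (x * w) * (x * w) = w * (star x * x) * w := by
          rw [star_mul, hwsa]; simp only [mul_assoc]
      _ = w * y * (p * w) := by rw [e]; simp only [mul_assoc]
      _ = p := by rw [← hwp.eq, ← mul_assoc, hwyw, one_mul]
  have hvp : (x * w) * p = x * w := by
    rw [mul_assoc, hwp.eq, ← mul_assoc, hxp]
  have hqv : q * (x * w) = x * w := by rw [← mul_assoc, hqx]
  generalize x * w = v at hvx hvv hvp hqv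
  refine ⟨v, hvv, ?_, hvp, hqv, hvx⟩
  have hvq : star v * q = star v := by rw [← hq, ← star_mul, hqv]
  have hz := proj_zero (q - v * star v) (by simp [hq]) (by
    simp only [sub_mul, mul_sub, hq2]
    rw [← mul_assoc, hqv, mul_assoc v, hvq,
      show v * star v * (v * star v) = v * (star v * v) * star v by simp only [mul_assoc], hvv, hvp]
    abel) (by
    have e : q - v * star v = -(x * star x - q) - (v - x) * star v - x * star (v - x) := by
      rw [star_sub]; noncomm_ring
    have hv : ‖v‖ ≤ 4 := by
      have : v = x + (v - x) := by abel
      rw [this]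
      refine (norm_add_le _ _).trans ?_
      linarith
    have b1 : ‖(v - x) * star v‖ ≤ 2 * ν * 4 := by
      refine (norm_mul_le _ _).trans (mul_le_mul hvx ?_ (norm_nonneg _) (by positivity))
      rwa [norm_star]
    have b2 : ‖x * star (v - x)‖ ≤ 2 * (2 * ν) := by
      refine (norm_mul_le _ _).trans (mul_le_mul hx ?_ (norm_nonneg _) (by positivity))
      rwa [norm_star]
    rw [e]
    have b3 := norm_sub_le (-(x * star x - q) - (v - x) * star v) (x * star (v - x))
    have b4 := norm_sub_le (-(x * star x - q)) ((v - x) * star v)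
    rw [norm_neg] at b4
    linarith)
  exact (sub_eq_zero.1 hz).symm

/-- Step 1: orthogonal projections summing to one close to an approximate system. -/
lemma step_one {A : Type*} [CStarAlgebra A] {n : ℕ} (hn : 1 ≤ n) (a : Fin n → A) (δ : ℝ)
    (hδ0 : 0 < δ) (hδ : 10 * (n:ℝ)^3 * δ < 1)
    (h1 : ∀ r, ‖star (a r) - a r‖ ≤ δ)
    (h2 : ∀ r s, ‖a r * a s - (if r = s then a r else 0)‖ ≤ δ)
    (h3 : ∀ r, ‖a r‖ ≤ 2) (h4 : ‖1 - ∑ r, a r‖ ≤ δ) :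
    ∃ p : Fin n → A, (∀ r, star (p r) = p r) ∧
      (∀ r s, p r * p s = if r = s then p r else 0) ∧ (∑ r, p r = 1) ∧
      (∀ r, ‖p r‖ ≤ 1) ∧ (∀ r, ‖p r - a r‖ ≤ 17 * (n:ℝ)^3 * δ) := by
  have hn' : (1:ℝ) ≤ n := by exact_mod_cast hn
  have hrn : ∀ r : Fin n, ‖((r:ℕ):ℝ)‖ ≤ n := fun r => by
    rw [Real.norm_natCast]; exact_mod_cast r.2.le
  set h0 : A := ∑ r : Fin n, ((r:ℕ):ℝ) • a r with hh0
  set h : A := (1/2 : ℝ) • (h0 + star h0) with hh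
  have hsa : IsSelfAdjoint h := by
    rw [isSelfAdjoint_iff, hh]; simp [add_comm]
  have hhd : ‖h - h0‖ ≤ (n:ℝ)^2 * δ / 2 := by
    have e : h - h0 = (1/2 : ℝ) • ∑ r : Fin n, ((r:ℕ):ℝ) • (star (a r) - a r) := by
      simp only [smul_sub, Finset.sum_sub_distrib]
      have : star h0 = ∑ r : Fin n, ((r:ℕ):ℝ) • star (a r) := by
        rw [hh0, star_sum]; simp
      rw [← this, ← hh0, hh]
      module
    rw [e, norm_smul]
    have : ‖∑ r : Fin n, ((r:ℕ):ℝ) • (star (a r) - a r)‖ ≤ ∑ r : Fin n, n * δ := by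
      refine norm_sum_le_of_le _ fun r _ => ?_
      rw [norm_smul]
      exact mul_le_mul (hrn r) (h1 r) (norm_nonneg _) (by positivity)
    simp only [Finset.sum_const, Finset.card_univ, Fintype.card_fin, nsmul_eq_mul] at this
    have e2 : ‖(1/2:ℝ)‖ = 1/2 := by norm_num
    rw [e2]
    nlinarith
  have hha : ∀ r : Fin n, ‖(h - algebraMap ℝ A (r:ℕ)) * a r‖ ≤ 2 * (n:ℝ)^2 * δ := by
    intro r
    have e : (h - algebraMap ℝ A (r:ℕ)) * a r = (h - h0) * a r +
        ∑ s : Fin n, ((s:ℕ):ℝ) • (a s * a r - (if s = r then a s else 0)) := by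
      simp only [smul_sub, Finset.sum_sub_distrib, smul_ite, smul_zero, Finset.sum_ite_eq',
        Finset.mem_univ, if_true, ← smul_mul_assoc, ← Finset.sum_mul]
      rw [← hh0, sub_mul, sub_mul, Algebra.algebraMap_eq_smul_one]
      simp only [smul_mul_assoc, one_mul]
      abel
    have b1 : ‖(h - h0) * a r‖ ≤ (n:ℝ)^2 * δ / 2 * 2 :=
      (norm_mul_le _ _).trans (mul_le_mul hhd (h3 r) (norm_nonneg _) (by positivity))
    have b2 : ‖∑ s : Fin n, ((s:ℕ):ℝ) • (a s * a r - (if s = r then a s else 0))‖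
        ≤ ∑ s : Fin n, n * δ := by
      refine norm_sum_le_of_le _ fun s _ => ?_
      rw [norm_smul]
      exact mul_le_mul (hrn s) (h2 s r) (norm_nonneg _) (by positivity)
    simp only [Finset.sum_const, Finset.card_univ, Fintype.card_fin, nsmul_eq_mul] at b2
    rw [e]
    refine (norm_add_le _ _).trans ?_
    nlinarith
  have hspec : ∀ t ∈ spectrum ℝ h, ∃ r : Fin n, |t - (r : ℕ)| < 1/4 := by
    intro t ht
    by_contra! hc
    set d : A := algebraMap ℝ A t - h with hd
    have hdsa : star d = d := by
      rw [hd, star_sub, hsa.star_eq, Algebra.algebraMap_eq_smul_one]; simp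
    set c : A := ∑ r : Fin n, (t - (r:ℕ))⁻¹ • a r with hc'
    have e : 1 - d * c = (1 - ∑ r, a r) +
        ∑ r : Fin n, (t - (r:ℕ))⁻¹ • ((h - algebraMap ℝ A (r:ℕ)) * a r) := by
      rw [sub_add, hc', Finset.mul_sum, ← Finset.sum_sub_distrib]
      congr 1
      refine Finset.sum_congr rfl fun r _ => ?_
      have h5 : t - (r:ℕ) ≠ 0 := by
        intro h; have := hc r; rw [h] at this; norm_num at this
      have e1 : a r = (t - (r:ℕ))⁻¹ • ((t - (r:ℕ)) • a r) := by
        rw [smul_smul, inv_mul_cancel₀ h5, one_smul]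
      conv_rhs => enter [1]; rw [e1]
      rw [← smul_sub, mul_smul_comm]
      congr 1
      rw [hd]
      simp only [Algebra.algebraMap_eq_smul_one, sub_mul, smul_mul_assoc, one_mul, sub_smul]
      abel
    have hlt : ‖1 - d * c‖ < 1 := by
      have b : ‖∑ r : Fin n, (t - (r:ℕ))⁻¹ • ((h - algebraMap ℝ A (r:ℕ)) * a r)‖
          ≤ ∑ r : Fin n, 4 * (2 * (n:ℝ)^2 * δ) := by
        refine norm_sum_le_of_le _ fun s _ => ?_
        rw [norm_smul]
        refine mul_le_mul ?_ (hha s) (norm_nonneg _) (by positivity)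
        rw [norm_inv, Real.norm_eq_abs]
        refine inv_le_of_inv_le₀ (by norm_num) ?_
        have := hc s
        linarith
      simp only [Finset.sum_const, Finset.card_univ, Fintype.card_fin, nsmul_eq_mul] at b
      rw [e]
      refine (norm_add_le _ _).trans_lt ?_
      have : (1:ℝ) ≤ (n:ℝ)^3 := one_le_pow₀ hn'
      nlinarith
    have hu : IsUnit (d * c) := by
      have := isUnit_one_sub_of_norm_lt_one hlt
      rwa [sub_sub_cancel] at this
    apply (spectrum.mem_iff.1 ht)
    obtain ⟨z, hz, -⟩ := isUnit_iff_exists.1 hu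
    have r1 : d * (c * z) = 1 := by rw [← mul_assoc, hz]
    have r2 : star (c * z) * d = 1 := by
      have := congrArg star r1
      rwa [star_mul, hdsa, star_one] at this
    have r3 : star (c * z) = c * z := left_inv_eq_right_inv r2 r1
    exact isUnit_iff_exists.2 ⟨c * z, r1, r3 ▸ r2⟩
  obtain ⟨p, p1, p2, p3, p4, p5⟩ := spec_proj h hsa hspec
  refine ⟨p, p1, p2, p3, p4, fun r => ?_⟩
  have hpa : ∀ r s, r ≠ s → ‖p s * a r‖ ≤ 4 * (2 * (n:ℝ)^2 * δ) := by
    intro r s hrs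
    obtain ⟨g, hg, e⟩ := p5 r s hrs
    rw [e, mul_assoc]
    exact (norm_mul_le _ _).trans (mul_le_mul hg (hha r) (norm_nonneg _) (by norm_num))
  have e : p r - a r = p r * (1 - ∑ s, a s) +
      ∑ s : Fin n, (p r * a s - p s * a r) := by
    rw [Finset.sum_sub_distrib, ← Finset.mul_sum, ← Finset.sum_mul, p3]
    noncomm_ring
  have b1 : ‖p r * (1 - ∑ s, a s)‖ ≤ 1 * δ :=
    (norm_mul_le _ _).trans (mul_le_mul (p4 r) h4 (norm_nonneg _) (by norm_num))
  have b2 : ‖∑ s : Fin n, (p r * a s - p s * a r)‖ ≤ ∑ s : Fin n, 16 * (n:ℝ)^2 * δ := by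
    refine norm_sum_le_of_le _ fun s _ => ?_
    by_cases hrs : r = s
    · subst hrs; rw [sub_self, norm_zero]; positivity
    · refine (norm_sub_le _ _).trans ?_
      have := hpa r s hrs
      have := hpa s r (Ne.symm hrs)
      linarith
  simp only [Finset.sum_const, Finset.card_univ, Fintype.card_fin, nsmul_eq_mul] at b2
  rw [e]
  refine (norm_add_le _ _).trans ?_
  have : (1:ℝ) ≤ (n:ℝ)^3 := one_le_pow₀ hn'
  nlinarith

lemma mul_bd {A : Type*} [CStarAlgebra A] {x y : A} {α β : ℝ} (hx : ‖x‖ ≤ α) (hy : ‖y‖ ≤ β) :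
    ‖x * y‖ ≤ α * β :=
  (norm_mul_le _ _).trans (mul_le_mul hx hy (norm_nonneg _) ((norm_nonneg _).trans hx))

end MUWS

/-- The relations defining an `n × n` system of matrix units whose diagonal sums to
the unit are weakly stable, uniformly over all unital C*-algebras: approximate systems of matrix
units (with approximately summing diagonal) are uniformly close to exact ones. -/
theorem matrix_units_weakly_stable (n : ℕ) (hn : 1 ≤ n) :
    ∀ ε : ℝ, 0 < ε → ∃ δ : ℝ, 0 < δ ∧
      ∀ (A : Type*) [CStarAlgebra A],
        ∀ a : Fin n → Fin n → A,
          (∀ r s, ‖star (a r s) - a s r‖ < δ) →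
          (∀ r s r' s', ‖a r s * a r' s' - (if s = r' then a r s' else 0)‖ < δ) →
          (∀ r s, ‖a r s‖ < 1 + δ) →
          ‖(1 : A) - ∑ r, a r r‖ < δ →
          ∃ b : Fin n → Fin n → A,
            (∀ r s, star (b r s) = b s r) ∧
            (∀ r s r' s', b r s * b r' s' = if s = r' then b r s' else 0) ∧
            (∑ r, b r r) = 1 ∧
            (∀ r s, ‖a r s - b r s‖ < ε) := by
  intro ε hε
  have hn' : (1:ℝ) ≤ n := by exact_mod_cast hn
  have hn3 : (1:ℝ) ≤ (n:ℝ)^3 := one_le_pow₀ hn'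
  set M : ℝ := 17 * (n:ℝ)^3 with hM
  have hM1 : 1 ≤ M := by linarith
  have hm : 0 < min 1 ε := lt_min one_pos hε
  set δ : ℝ := min 1 ε / (1000 * M) with hδ
  have hδ0 : 0 < δ := by positivity
  have hMδ : 1000 * (M * δ) = min 1 ε := by rw [hδ]; field_simp
  have hκ1 : 1000 * (M * δ) ≤ 1 := hMδ ▸ min_le_left _ _
  have hκε : 1000 * (M * δ) ≤ ε := hMδ ▸ min_le_right _ _
  have hκ0 : 0 < M * δ := by positivity
  have hδκ : δ ≤ M * δ := le_mul_of_one_le_left hδ0.le hM1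
  refine ⟨δ, hδ0, ?_⟩
  intro A _ a H1 H2 H3 H4
  have hA2 : ∀ r s, ‖a r s‖ ≤ 2 := fun r s => by have := H3 r s; linarith
  obtain ⟨p, p1, p2, p3, p4, p5⟩ := MUWS.step_one hn (fun r => a r r) δ hδ0
    (by rw [hM] at hκ1; nlinarith) (fun r => (H1 r r).le)
    (fun r s => by
      have := (H2 r r s s).le
      by_cases h : r = s
      · subst h; simpa using this
      · simpa [h] using this)
    (fun r => hA2 r r) H4.le
  rw [← hM] at p5
  have hidem : ∀ r, p r * p r = p r := fun r => by rw [p2]; simp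
  generalize M * δ = κ at *
  have H2' : ∀ r s t, ‖a r s * a s t - a r t‖ ≤ δ := fun r s t => by
    simpa using (H2 r s s t).le
  let o : Fin n := ⟨0, hn⟩
  have key : ∀ r : Fin n, ∃ v : A, star v * v = p o ∧ v * star v = p r ∧ v * p o = v ∧
      p r * v = v ∧ ‖v - a r o‖ ≤ 62 * κ := by
    intro r
    have hx : ‖p r * a r o * p o‖ ≤ 2 := by
      have := MUWS.mul_bd (MUWS.mul_bd (p4 r) (hA2 r o)) (p4 o)
      linarith
    have hxa : ‖p r * a r o * p o - a r o‖ ≤ 6 * κ := by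
      have e : p r * a r o * p o - a r o = (p r - a r r) * a r o * p o +
        (a r r * a r o - a r o) * p o + a r o * (p o - a o o) + (a r o * a o o - a r o) := by
        noncomm_ring
      rw [e]
      have b1 := MUWS.mul_bd (MUWS.mul_bd (p5 r) (hA2 r o)) (p4 o)
      have b2 := MUWS.mul_bd (H2' r r o) (p4 o)
      have b3 := MUWS.mul_bd (hA2 r o) (p5 o)
      have b4 := H2' r o o
      refine norm_add₄_le.trans ?_
      linarith
    have hxp : p r * a r o * p o * p o = p r * a r o * p o := by
      rw [mul_assoc _ (p o), hidem]
    have hqx : p r * (p r * a r o * p o) = p r * a r o * p o := by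
      rw [← mul_assoc, ← mul_assoc, hidem]
    generalize p r * a r o * p o = x at *
    have hxs : ‖star x - a o r‖ ≤ 7 * κ := by
      have e : star x - a o r = star (x - a r o) + (star (a r o) - a o r) := by
        rw [star_sub]; abel
      rw [e]
      refine (norm_add_le _ _).trans ?_
      rw [norm_star]
      have := H1 r o
      linarith
    have c1 : ‖star x * x - p o‖ ≤ 28 * κ := by
      have e : star x * x - p o = (star x - a o r) * x + a o r * (x - a r o) +
          (a o r * a r o - a o o) + (-(p o - a o o)) := by noncomm_ring
      rw [e]
      have b1 := MUWS.mul_bd hxs hx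
      have b2 := MUWS.mul_bd (hA2 o r) hxa
      have b3 := H2' o r o
      have b4 := p5 o
      refine norm_add₄_le.trans ?_
      rw [norm_neg]
      linarith
    have c2 : ‖x * star x - p r‖ ≤ 28 * κ := by
      have e : x * star x - p r = x * (star x - a o r) + (x - a r o) * a o r +
          (a r o * a o r - a r r) + (-(p r - a r r)) := by noncomm_ring
      rw [e]
      have b1 := MUWS.mul_bd hx hxs
      have b2 := MUWS.mul_bd hxa (hA2 o r)
      have b3 := H2' r o r
      have b4 := p5 r
      refine norm_add₄_le.trans ?_
      rw [norm_neg]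
      linarith
    obtain ⟨v, v1, v2, v3, v4, v5⟩ := MUWS.polar (p o) (p r) x (28 * κ) (p1 o) (hidem o) (p1 r)
      (hidem r) hxp hqx hx c1 c2 (by linarith)
    refine ⟨v, v1, v2, v3, v4, ?_⟩
    have e : v - a r o = (v - x) + (x - a r o) := by abel
    rw [e]
    refine (norm_add_le _ _).trans ?_
    linarith
  choose v v1 v2 v3 v4 v5 using key
  refine ⟨fun r s => v r * star (v s), ?_, ?_, ?_, ?_⟩
  · intro r s; simp
  · intro r s r' s'
    have e : v r * star (v s) * (v r' * star (v s')) = v r * (star (v s) * v r') * star (v s') := by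
      simp only [mul_assoc]
    simp only
    rw [e]
    split_ifs with h
    · subst h
      rw [v1, v3]
    · have e2 : star (v s) * v r' = 0 := by
        have : star (v s) = star (v s) * p s := by
          conv_lhs => rw [← v4 s, star_mul, p1]
        rw [this, ← v4 r', mul_assoc, ← mul_assoc (p s), p2, if_neg h]
        simp
      rw [e2]; simp
  · simp only [v2, p3]
  · intro r s
    have hvs : ‖star (v s) - a o s‖ ≤ 63 * κ := by
      have e : star (v s) - a o s = star (v s - a s o) + (star (a s o) - a o s) := by
        rw [star_sub]; abel
      rw [e]
      refine (norm_add_le _ _).trans ?_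
      rw [norm_star]
      have := H1 s o
      have := v5 s
      linarith
    have hv4 : ‖star (v s)‖ ≤ 4 := by
      have e : star (v s) = (star (v s) - a o s) + a o s := by abel
      rw [e]
      refine (norm_add_le _ _).trans ?_
      have := hA2 o s
      linarith
    have e : a r s - v r * star (v s) = -((v r - a r o) * star (v s) +
      a r o * (star (v s) - a o s) + (a r o * a o s - a r s)) := by noncomm_ring
    rw [e, norm_neg]
    have b1 := MUWS.mul_bd (v5 r) hv4
    have b2 := MUWS.mul_bd (hA2 r o) hvs
    have b3 := H2' r o s
    refine norm_add₃_le.trans_lt ?_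
    linarith
end

section
/- Let A be a unital C*-algebra over ℂ admitting a matricial chain (m_k, A_k) and also admitting a matricial chain (n_ℓ, A'_ℓ). Then for every k there exists ℓ such that m_k divides n_ℓ. -/
open scoped Matrix.Norms.L2Operator in
lemma uhf_aux_entry {n : ℕ} (M : Matrix (Fin n) (Fin n) ℂ) (i : Fin n) : ‖M i i‖ ≤ ‖M‖ := by
  have h := Matrix.l2_opNorm_mulVec M (EuclideanSpace.single i (1 : ℂ))
  have h2 := PiLp.norm_apply_le ((EuclideanSpace.equiv (Fin n) ℂ).symm
    (M.mulVec (EuclideanSpace.single i (1 : ℂ)))) i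
  have h3 := h2.trans h
  simpa using h3

open scoped Matrix.Norms.L2Operator in
lemma uhf_aux_trace_le {n : ℕ} (M : Matrix (Fin n) (Fin n) ℂ) : ‖M.trace‖ ≤ n * ‖M‖ := by
  unfold Matrix.trace
  refine (norm_sum_le _ _).trans ?_
  refine (Finset.sum_le_sum (fun i _ => uhf_aux_entry M i)).trans ?_
  simp

open scoped Matrix.Norms.L2Operator in
lemma uhf_aux_functional {A : Type*} [CStarAlgebra A] {n : ℕ} (hn : 0 < n)
    (ψ : Matrix (Fin n) (Fin n) ℂ →⋆ₐ[ℂ] A) (hψ : Function.Injective ψ) :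
    ∃ g : StrongDual ℂ A, ‖g‖ ≤ 1 ∧ ∀ x, g (ψ x) = x.trace / n := by
  let L : Matrix (Fin n) (Fin n) ℂ →ₗ[ℂ] A := (ψ.toAlgHom).toLinearMap
  have hL : ∀ x, L x = ψ x := fun x => rfl
  let e := LinearEquiv.ofInjective L hψ
  let f0 : LinearMap.range L →ₗ[ℂ] ℂ :=
    ((n : ℂ)⁻¹ • Matrix.traceLinearMap (Fin n) ℂ ℂ) ∘ₗ e.symm.toLinearMap
  have hn' : (0 : ℝ) < n := by exact_mod_cast hn
  have hb : ∀ y, ‖f0 y‖ ≤ 1 * ‖y‖ := by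
    intro y
    obtain ⟨x, rfl⟩ := e.surjective y
    have h1 : ‖e x‖ = ‖x‖ := by
      change ‖L x‖ = ‖x‖
      rw [hL, NonUnitalStarAlgHom.norm_map ψ hψ]
    have h2 : f0 (e x) = (n : ℂ)⁻¹ * x.trace := by simp [f0]
    rw [h1, h2, norm_mul, norm_inv, Complex.norm_natCast, one_mul, inv_mul_le_iff₀ hn']
    exact uhf_aux_trace_le x
  obtain ⟨g, hg, hg2⟩ := exists_extension_norm_eq (LinearMap.range L) (f0.mkContinuous 1 hb)
  refine ⟨g, hg2 ▸ LinearMap.mkContinuous_norm_le _ zero_le_one _, fun x => ?_⟩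
  have := hg (e x)
  have h3 : ((e x : LinearMap.range L) : A) = ψ x := rfl
  rw [h3] at this
  rw [this]
  simp [f0, div_eq_inv_mul]

/-- a tracial functional on matrices is a multiple of the trace -/
lemma uhf_aux_unique {n : ℕ} (g : Matrix (Fin n) (Fin n) ℂ →ₗ[ℂ] ℂ)
    (hg : ∀ x y, g (x * y) = g (y * x)) (i0 : Fin n) (x : Matrix (Fin n) (Fin n) ℂ) :
    g x = x.trace * g (Matrix.single i0 i0 1) := by
  have h1 : ∀ i j, g (Matrix.single i j 1) = if i = j then g (Matrix.single i0 i0 1) else 0 := by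
    intro i j
    have := hg (Matrix.single i i0 1) (Matrix.single i0 j 1)
    rw [Matrix.single_mul_single_same, mul_one] at this
    rw [this]
    split_ifs with h
    · subst h
      simp
    · rw [Matrix.single_mul_single_of_ne _ _ _ _ (Ne.symm h), map_zero]
  conv_lhs => rw [Matrix.matrix_eq_sum_single x]
  have h2 : ∀ i j, g (Matrix.single i j (x i j)) = x i j * g (Matrix.single i j 1) := by
    intro i j
    rw [← smul_eq_mul, ← map_smul, Matrix.smul_single, smul_eq_mul, mul_one]
  simp only [map_sum, h2]
  rw [Matrix.trace, Finset.sum_mul]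
  refine Finset.sum_congr rfl fun i _ => ?_
  rw [Finset.sum_eq_single i]
  · rw [h1, if_pos rfl, Matrix.diag_apply]
  · intro j _ hj
    rw [h1, if_neg (Ne.symm hj), mul_zero]
  · simp

lemma uhf_aux_idem {n : ℕ} (p : Matrix (Fin n) (Fin n) ℂ) (hp : p * p = p) :
    ∃ r : ℕ, p.trace = r := by
  have h : IsIdempotentElem (Matrix.toLin' p) := by
    rw [IsIdempotentElem, Module.End.mul_eq_comp, ← Matrix.toLin'_mul, hp]
  exact ⟨_, by rw [← Matrix.trace_toLin'_eq, (LinearMap.IsIdempotentElem.isProj_range _ h).trace]⟩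

lemma uhf_aux_similar {A : Type*} [CStarAlgebra A] (τ : A → ℂ)
    (hτ : ∀ x y, τ (x * y) = τ (y * x)) (p e : A) (hp : p * p = p) (he : e * e = e)
    (hpn : ‖p‖ ≤ 1) (h1 : ‖(1 : A)‖ ≤ 1) (hpe : ‖p - e‖ < 1 / 3) : τ p = τ e := by
  have hu : IsUnit (1 - (2 * p - 1) * (p - e)) := by
    apply isUnit_one_sub_of_norm_lt_one
    have h3 : ‖2 * p - 1‖ ≤ 3 := by
      rw [two_mul]
      refine (norm_sub_le _ _).trans ?_
      have := norm_add_le p p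
      linarith
    have := norm_mul_le (2 * p - 1) (p - e)
    nlinarith [norm_nonneg (p - e)]
  obtain ⟨u, hu⟩ := hu
  have key : p * u = u * e := by
    rw [hu]
    have e1 : p * (1 - (2 * p - 1) * (p - e)) = p * e + ((p - p * p) * (1 + 2 * p - 2 * e)) := by
      noncomm_ring
    have e2 : (1 - (2 * p - 1) * (p - e)) * e = p * e + (2 * p - 1) * (e * e - e)
        + 2 * (p - p * p) * e := by
      noncomm_ring
    rw [e1, e2, hp, he]
    simp
  have : p = u * (e * (↑u⁻¹ : A)) := by
    rw [← mul_assoc, ← key, mul_assoc, Units.mul_inv, mul_one]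
  rw [this, hτ, mul_assoc, Units.inv_mul, mul_one]

/-- perturbing an almost projection to a projection -/
lemma uhf_aux_proj {B : Type*} [CStarAlgebra B] (b : B) (hb : IsSelfAdjoint b)
    (h : ‖b * b - b‖ < 3 / 16) :
    ∃ p : B, IsStarProjection p ∧ ‖p - b‖ ≤ 1 / 4 := by
  let f : ℝ → ℝ := fun x => max 0 (min 1 (2 * x - 1 / 2))
  have hf : Continuous f := by fun_prop
  have hs : ∀ x ∈ spectrum ℝ b, |x * x - x| < 3 / 16 := by
    intro x hx
    have hc : cfc (fun x : ℝ => x * x - x) b = b * b - b := by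
      rw [cfc_sub (fun x : ℝ => x * x) (fun x => x) b, cfc_mul (fun x : ℝ => x) (fun x => x) b,
        cfc_id' ℝ b]
    rw [← hc] at h
    have := norm_apply_le_norm_cfc (fun x : ℝ => x * x - x) b hx
    exact lt_of_le_of_lt this h
  have hs2 : ∀ x ∈ spectrum ℝ b, (f x = 0 ∧ |x| ≤ 1 / 4) ∨ (f x = 1 ∧ |1 - x| ≤ 1 / 4) := by
    intro x hx
    have h1 := abs_lt.1 (hs x hx)
    by_cases hx2 : x ≤ 1 / 2
    · left
      have : x < 1 / 4 := by by_contra! hh; nlinarith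
      refine ⟨?_, ?_⟩
      · apply max_eq_left
        exact (min_le_right _ _).trans (by linarith)
      · rw [abs_le]; constructor
        · by_contra! hh; nlinarith
        · linarith
    · right
      have : 3 / 4 < x := by by_contra! hh; nlinarith
      refine ⟨?_, ?_⟩
      · simp only [f]
        rw [min_eq_left (by linarith), max_eq_right zero_le_one]
      · rw [abs_le]; constructor
        · by_contra! hh; nlinarith
        · linarith
  refine ⟨cfc f b, ⟨?_, ?_⟩, ?_⟩
  · rw [IsIdempotentElem, ← cfc_mul f f b]
    apply cfc_congr
    intro x hx
    rcases hs2 x hx with h | h <;> simp [h.1]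
  · exact cfc_predicate f b
  · have : cfc f b - b = cfc (fun x => f x - x) b := by
      rw [cfc_sub f (fun x => x) b, cfc_id' ℝ b]
    rw [this]
    apply norm_cfc_le (by norm_num)
    intro x hx
    rcases hs2 x hx with h | h <;> simpa [h.1] using h.2

lemma uhf_aux_tracial {A : Type*} [CStarAlgebra A] (n : ℕ → ℕ) (hn : ∀ l, 0 < n l)
    (ψ : ∀ l, Matrix (Fin (n l)) (Fin (n l)) ℂ →⋆ₐ[ℂ] A) (hψ : ∀ l, Function.Injective (ψ l))
    (hmono : Monotone fun l => Set.range (ψ l)) (hd : Dense (⋃ l, Set.range (ψ l))) :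
    ∃ τ : StrongDual ℂ A, τ 1 = 1 ∧ ∀ x y, τ (x * y) = τ (y * x) := by
  choose g hg1 hg2 using fun l => uhf_aux_functional (hn l) (ψ l) (hψ l)
  let G : ℕ → WeakDual ℂ A := fun l => StrongDual.toWeakDual (g l)
  obtain ⟨τ, -, hτ⟩ := (WeakDual.isCompact_closedBall (𝕜 := ℂ) (0 : StrongDual ℂ A) 1).ultrafilter_le_nhds
    ((Filter.hyperfilter ℕ).map G) (by
      rw [Ultrafilter.coe_map, Filter.le_principal_iff, Filter.mem_map]
      apply Filter.univ_mem'
      intro l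
      simpa [G] using hg1 l)
  have hlim : ∀ x, Filter.Tendsto (fun l => g l x) (Filter.hyperfilter ℕ) (nhds (τ x)) := by
    intro x
    exact ((WeakDual.eval_continuous x).tendsto τ).comp hτ
  have hlim2 : ∀ x y : A, (∀ᶠ l in Filter.atTop, g l x = g l y) → τ x = τ y := by
    intro x y h
    refine tendsto_nhds_unique_of_eventuallyEq (hlim x) (hlim y) ?_
    rw [← Nat.cofinite_eq_atTop] at h
    exact Filter.hyperfilter_le_cofinite h
  refine ⟨WeakDual.toStrongDual τ, ?_, ?_⟩
  · change τ 1 = 1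
    refine tendsto_nhds_unique (hlim 1) ?_
    have : ∀ l, g l 1 = 1 := by
      intro l
      have := hg2 l 1
      have h0 : (n l : ℂ) ≠ 0 := by exact_mod_cast (hn l).ne'
      rw [map_one] at this
      rw [this]
      simp [h0]
    simp only [this]
    exact tendsto_const_nhds
  · change ∀ x y, τ (x * y) = τ (y * x)
    have hc : Continuous τ := (WeakDual.toStrongDual τ).continuous
    intro x y
    have hx := (hd.prod hd) (x, y)
    refine closure_minimal (t := {z : A × A | τ (z.1 * z.2) = τ (z.2 * z.1)}) ?_ ?_ hx
    · rintro ⟨a, b⟩ ⟨ha, hb⟩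
      obtain ⟨i, ha⟩ := Set.mem_iUnion.1 ha
      obtain ⟨j, hb⟩ := Set.mem_iUnion.1 hb
      apply hlim2
      filter_upwards [Filter.eventually_ge_atTop i, Filter.eventually_ge_atTop j] with l h1 h2
      obtain ⟨a', rfl⟩ := hmono h1 ha
      obtain ⟨b', rfl⟩ := hmono h2 hb
      rw [← map_mul, ← map_mul, hg2, hg2, Matrix.trace_mul_comm]
    · exact isClosed_eq (hc.comp (by fun_prop)) (hc.comp (by fun_prop))

open scoped Matrix.Norms.L2Operator in
lemma uhf_aux_main {A : Type*} [CStarAlgebra A] (n : ℕ → ℕ) (hn : ∀ l, 0 < n l)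
    (ψ : ∀ l, Matrix (Fin (n l)) (Fin (n l)) ℂ →⋆ₐ[ℂ] A) (hψ : ∀ l, Function.Injective (ψ l))
    (hmono : Monotone fun l => Set.range (ψ l)) (hd : Dense (⋃ l, Set.range (ψ l)))
    (m : ℕ) (hm : 0 < m) (φ : Matrix (Fin m) (Fin m) ℂ →⋆ₐ[ℂ] A) : ∃ l, m ∣ n l := by
  obtain ⟨τ, hτ1, hτ⟩ := uhf_aux_tracial n hn ψ hψ hmono hd
  have htr : ∀ (k : ℕ), 0 < k → ∀ (ρ : Matrix (Fin k) (Fin k) ℂ →⋆ₐ[ℂ] A) x,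
      τ (ρ x) * k = x.trace := by
    intro k hk ρ x
    let g : Matrix (Fin k) (Fin k) ℂ →ₗ[ℂ] ℂ := τ.toLinearMap ∘ₗ ρ.toAlgHom.toLinearMap
    have hg : ∀ x, g x = τ (ρ x) := fun _ => rfl
    have hu := uhf_aux_unique g (fun x y => by rw [hg, hg, map_mul ρ, map_mul ρ, hτ]) ⟨0, hk⟩
    have h1 := hu 1
    rw [hg, map_one, hτ1, Matrix.trace_one, Fintype.card_fin] at h1
    rw [← hg, hu x, mul_assoc, mul_comm (g _), ← h1, mul_one]
  let q : Matrix (Fin m) (Fin m) ℂ := Matrix.single ⟨0, hm⟩ ⟨0, hm⟩ 1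
  have hq : IsStarProjection q := by
    constructor
    · simp [q, IsIdempotentElem]
    · simp [q, IsSelfAdjoint, Matrix.star_eq_conjTranspose]
  have he : IsStarProjection (φ q) := hq.map φ
  set e := φ q with hedef
  have hqt : τ e * m = 1 := by rw [htr m hm φ q]; simp [q]
  have hen : ‖e‖ ≤ 1 := he.norm_le
  have h1n : ‖(1 : A)‖ ≤ 1 := (IsStarProjection.one A).norm_le
  obtain ⟨x, hx, hxe⟩ := hd.exists_dist_lt e (show (0 : ℝ) < 1 / 20 by norm_num)
  obtain ⟨l, y, rfl⟩ := Set.mem_iUnion.1 hx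
  rw [dist_eq_norm] at hxe
  let b : Matrix (Fin (n l)) (Fin (n l)) ℂ := (1 / 2 : ℂ) • (y + star y)
  have hb : IsSelfAdjoint b := by
    simp [b, IsSelfAdjoint, star_smul, star_add, add_comm]
  have hbe : ‖ψ l b - e‖ < 1 / 20 := by
    have h1 : ψ l b - e = (1 / 2 : ℂ) • ((ψ l y - e) + star (ψ l y - e)) := by
      have h2 : e = (1 / 2 : ℂ) • (e + e) := by rw [← two_smul ℂ e, smul_smul]; norm_num
      rw [star_sub, he.isSelfAdjoint.star_eq]
      conv_lhs => rw [h2]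
      simp only [b, map_smul, map_add, map_star]
      module
    rw [h1, norm_smul]
    have h3 := norm_add_le (ψ l y - e) (star (ψ l y - e))
    rw [norm_star] at h3
    rw [norm_sub_rev] at hxe
    have : ‖(1 / 2 : ℂ)‖ = 1 / 2 := by simp
    rw [this]
    linarith
  have hiso : ∀ z, ‖ψ l z‖ = ‖z‖ := NonUnitalStarAlgHom.norm_map (ψ l) (hψ l)
  have hbb : ‖b * b - b‖ < 3 / 16 := by
    rw [← hiso, map_sub, map_mul]
    set a := ψ l b
    have hee : e * e = e := he.isIdempotentElem
    have h1 : a * a - a = (a - e) * (a - e) + e * (a - e) + (a - e) * e - (a - e) := by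
      have : (a - e) * (a - e) + e * (a - e) + (a - e) * e - (a - e)
        = a * a - a - (e * e - e) := by noncomm_ring
      rw [this, hee]; simp
    rw [h1]
    have i1 := norm_sub_le ((a - e) * (a - e) + e * (a - e) + (a - e) * e) (a - e)
    have i2 := norm_add_le ((a - e) * (a - e) + e * (a - e)) ((a - e) * e)
    have i3 := norm_add_le ((a - e) * (a - e)) (e * (a - e))
    have i4 := norm_mul_le (a - e) (a - e)
    have i5 := norm_mul_le e (a - e)
    have i6 := norm_mul_le (a - e) e
    nlinarith [norm_nonneg (a - e), norm_nonneg e]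
  obtain ⟨p, hp, hpb⟩ := uhf_aux_proj b hb hbb
  have hpe : ‖ψ l p - e‖ < 1 / 3 := by
    rw [← hiso, map_sub] at hpb
    have := norm_add_le (ψ l p - ψ l b) (ψ l b - e)
    rw [sub_add_sub_cancel] at this
    linarith
  have hsim := uhf_aux_similar τ hτ (ψ l p) e
    (by rw [← map_mul, hp.isIdempotentElem.eq]) he.isIdempotentElem
    (hp.map (ψ l)).norm_le h1n hpe
  obtain ⟨r, hr⟩ := uhf_aux_idem p hp.isIdempotentElem
  have h5 := htr (n l) (hn l) (ψ l) p
  rw [hr, hsim] at h5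
  refine ⟨l, r, ?_⟩
  have : (n l : ℂ) = m * r := by
    rw [← h5]
    linear_combination (-(n l : ℂ)) * hqt
  exact_mod_cast this

/-- If a unital C*-algebra admits two matricial chains `(m k, Ak k)` and
`(n ℓ, A'ℓ)`, then every matrix size `m k` of the first chain divides some matrix size `n ℓ`
of the second chain. -/
theorem uhf_chain_interleaving_divisibility
    {A : Type*} [CStarAlgebra A]
    (m : ℕ → ℕ) (Ak : ℕ → StarSubalgebra ℂ A)
    (hmpos : ∀ k, 0 < m k)
    (hmono : ∀ k, Ak k ≤ Ak (k + 1))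
    (hiso : ∀ k, Nonempty ((Ak k) ≃⋆ₐ[ℂ] Matrix (Fin (m k)) (Fin (m k)) ℂ))
    (hdense : Dense (⋃ k, (Ak k : Set A)))
    (n : ℕ → ℕ) (Ak' : ℕ → StarSubalgebra ℂ A)
    (hnpos : ∀ l, 0 < n l)
    (hmono' : ∀ l, Ak' l ≤ Ak' (l + 1))
    (hiso' : ∀ l, Nonempty ((Ak' l) ≃⋆ₐ[ℂ] Matrix (Fin (n l)) (Fin (n l)) ℂ))
    (hdense' : Dense (⋃ l, (Ak' l : Set A))) :
    ∀ k, ∃ l, m k ∣ n l := by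
  intro k
  obtain ⟨e⟩ := hiso k
  have e' := fun l => (hiso' l).some
  let ψ : ∀ l, Matrix (Fin (n l)) (Fin (n l)) ℂ →⋆ₐ[ℂ] A := fun l =>
    (Ak' l).subtype.comp ((e' l).symm : Matrix (Fin (n l)) (Fin (n l)) ℂ →⋆ₐ[ℂ] (Ak' l))
  have hψ : ∀ l x, ψ l x = ((e' l).symm x : A) := fun l x => rfl
  have hr : ∀ l, Set.range (ψ l) = (Ak' l : Set A) := by
    intro l
    ext a
    constructor
    · rintro ⟨x, rfl⟩
      rw [hψ]
      exact ((e' l).symm x).2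
    · intro ha
      exact ⟨e' l ⟨a, ha⟩, by rw [hψ]; simp⟩
  refine uhf_aux_main n hnpos ψ ?_ ?_ ?_ (m k) (hmpos k)
    ((Ak k).subtype.comp (e.symm : Matrix (Fin (m k)) (Fin (m k)) ℂ →⋆ₐ[ℂ] (Ak k)))
  · intro l x y hxy
    rw [hψ, hψ] at hxy
    exact (e' l).symm.injective (Subtype.ext hxy)
  · simp only [hr]
    exact monotone_nat_of_le_succ hmono'
  · simpa only [hr] using hdense'
end

section
/- Let A be a unital C*-algebra over ℂ admitting a matricial chain. Then for all projections p, q ∈ A and every ε > 0 there exist n ≥ 1, a closed unital *-subalgebra B of A (with 1_A ∈ B) that is *-isomorphic to M_n(ℂ), and projections p', q' ∈ B with ‖p − p'‖ < ε and ‖q − q'‖ < ε. -/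
lemma uhf_aux {A : Type*} [CStarAlgebra A] (Ak : ℕ → StarSubalgebra ℂ A)
    (hcl : ∀ k, IsClosed (Ak k : Set A))
    (hdense : Dense (⋃ k, (Ak k : Set A)))
    (p : A) (hp : star p = p ∧ p * p = p) (ε : ℝ) (hε : 0 < ε) :
    ∃ k, ∃ p' ∈ Ak k, (star p' = p' ∧ p' * p' = p') ∧ ‖p - p'‖ < ε := by
  obtain ⟨η, hη0, hη1, hη2⟩ : ∃ η : ℝ, 0 < η ∧ η ≤ 1 / 8 ∧ η ≤ ε / 8 :=
    ⟨min (1 / 8) (ε / 8), by positivity, min_le_left _ _, min_le_right _ _⟩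
  let s : A → A := fun b => (1 / 2 : ℂ) • (b + star b)
  have hs : Continuous s := by fun_prop
  have hsp : s p = p := by
    simp only [s, hp.1, ← two_smul ℂ p, smul_smul]; norm_num
  have hU : IsOpen {b | ‖p - s b‖ < ε / 2 ∧ ‖s b * s b - s b‖ < η} :=
    IsOpen.and (isOpen_lt (f := fun b => ‖p - s b‖) (by fun_prop) continuous_const)
      (isOpen_lt (f := fun b => ‖s b * s b - s b‖) (by fun_prop) continuous_const)
  obtain ⟨b, ⟨hb1, hb2⟩, hb⟩ := (hdense.inter_open_nonempty _ hU
    ⟨p, by simp only [Set.mem_ofPred_eq, hsp, hp.2, sub_self, norm_zero]; constructor <;> positivity⟩)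
  obtain ⟨k, hk⟩ := Set.mem_iUnion.1 hb
  have hsk : s b ∈ Ak k := (Ak k).smul_mem (add_mem hk (star_mem hk)) _
  have hsa : IsSelfAdjoint (s b) := by
    simp [s, isSelfAdjoint_iff, add_comm]
  generalize s b = a at *
  let f : ℝ → ℝ := fun x => if 1 / 2 < x then 1 else 0
  have hspec : ∀ x ∈ spectrum ℝ a, |x * x - x| < η := by
    intro x hx
    have h1 : cfc (fun x : ℝ => x * x - x) a = a * a - a := by
      rw [cfc_sub (fun x : ℝ => x * x) (fun x => x) a, cfc_mul (fun x : ℝ => x) (fun x => x) a,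
        cfc_id' ℝ a]
    have := norm_apply_le_norm_cfc (fun x : ℝ => x * x - x) a hx
    rw [h1] at this
    exact lt_of_le_of_lt this hb2
  have hf : ContinuousOn f (spectrum ℝ a) := by
    intro x hx
    apply ContinuousAt.continuousWithinAt
    have h := hspec x hx
    rcases lt_trichotomy x (1 / 2) with h1 | h1 | h1
    · refine continuousAt_const (y := (0 : ℝ)) |>.congr ?_
      filter_upwards [gt_mem_nhds h1] with y hy
      simp only [f, if_neg (not_lt.2 (le_of_lt hy))]
    · subst h1; norm_num [abs_lt] at h; linarith
    · refine continuousAt_const (y := (1 : ℝ)) |>.congr ?_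
      filter_upwards [lt_mem_nhds h1] with y hy
      simp only [f, if_pos hy]
  have hfa : IsSelfAdjoint (cfc f a) := cfc_predicate f a
  refine ⟨k, cfc f a, ?_, ⟨hfa, ?_⟩, ?_⟩
  · exact cfc_mem (𝕜' := ℂ) (hs := hcl k) f hsk
  · rw [← cfc_mul f f a]
    congr 1
    ext x
    simp only [f]; split_ifs <;> norm_num
  · have h2 : ‖a - cfc f a‖ ≤ 2 * η := by
      conv_lhs => rw [← cfc_id' ℝ a]
      rw [cfc_id' ℝ a]
      nth_rewrite 1 [← cfc_id' ℝ a]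
      rw [← cfc_sub (fun x => x) f a]
      refine norm_cfc_le (by positivity) ?_
      intro x hx
      have h := abs_lt.1 (hspec x hx)
      rw [Real.norm_eq_abs, abs_le]
      simp only [f]
      split_ifs with h1
      · constructor <;> nlinarith
      · constructor <;> nlinarith
    calc ‖p - cfc f a‖ ≤ ‖p - a‖ + ‖a - cfc f a‖ := norm_sub_le_norm_sub_add_norm_sub _ _ _
      _ < ε := by linarith

theorem uhf_projections_approx_in_matrix_subalgebra
    {A : Type*} [CStarAlgebra A]
    (n : ℕ → ℕ) (Ak : ℕ → StarSubalgebra ℂ A)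
    (hpos : ∀ k, 0 < n k)
    (hmono : ∀ k, Ak k ≤ Ak (k + 1))
    (hiso : ∀ k, Nonempty ((Ak k) ≃⋆ₐ[ℂ] Matrix (Fin (n k)) (Fin (n k)) ℂ))
    (hdense : Dense (⋃ k, (Ak k : Set A)))
    (p q : A)
    (hp : star p = p ∧ p * p = p)
    (hq : star q = q ∧ q * q = q)
    (ε : ℝ) (hε : 0 < ε) :
    ∃ (m : ℕ) (B : StarSubalgebra ℂ A) (p' q' : A), 1 ≤ m ∧
      IsClosed (B : Set A) ∧
      Nonempty (B ≃⋆ₐ[ℂ] Matrix (Fin m) (Fin m) ℂ) ∧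
      p' ∈ B ∧ q' ∈ B ∧
      (star p' = p' ∧ p' * p' = p') ∧ (star q' = q' ∧ q' * q' = q') ∧
      ‖p - p'‖ < ε ∧ ‖q - q'‖ < ε := by
  have hcl : ∀ k, IsClosed (Ak k : Set A) := by
    intro k
    obtain ⟨e⟩ := hiso k
    have : FiniteDimensional ℂ (Ak k).toSubalgebra.toSubmodule :=
      LinearEquiv.finiteDimensional (V := Matrix (Fin (n k)) (Fin (n k)) ℂ)
        (V₂ := Ak k) e.symm.toAlgEquiv.toLinearEquiv
    exact (Ak k).toSubalgebra.toSubmodule.closed_of_finiteDimensional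
  have hm : Monotone Ak := monotone_nat_of_le_succ hmono
  obtain ⟨i, p', hp', hpp, hpe⟩ := uhf_aux Ak hcl hdense p hp ε hε
  obtain ⟨j, q', hq', hqq, hqe⟩ := uhf_aux Ak hcl hdense q hq ε hε
  exact ⟨n (max i j), Ak (max i j), p', q', hpos _, hcl _, hiso _,
    hm (le_max_left i j) hp', hm (le_max_right i j) hq', hpp, hqq, hpe, hqe⟩
end

section
/- Let A be a unital C*-algebra over ℂ. Suppose (m_j) and (n_j) are sequences of positive integers with m_j ∣ m_{j+1} and n_j ∣ n_{j+1} for all j, and suppose φ_j : M_{m_j}(ℂ) → A and ψ_j : M_{n_j}(ℂ) → A are injective unital *-algebra homomorphisms satisfying the compatibility conditions φ_j = φ_{j+1} ∘ E_{m_j, m_{j+1}} and ψ_j = ψ_{j+1} ∘ E_{n_j, n_{j+1}}, such that ⋃_j range(φ_j) and ⋃_j range(ψ_j) are both dense in A. Then there exist strictly increasing sequences (k_j) and (ℓ_j) of natural numbers with m_{k_j} ∣ n_{ℓ_j} and n_{ℓ_j} ∣ m_{k_{j+1}} for all j, and a *-algebra automorphism γ of A (a StarAlgEquiv from A to A over ℂ)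 such that γ ∘ φ_{k_j} = ψ_{ℓ_j} ∘ E_{m_{k_j}, n_{ℓ_j}} for every j. -/
/-- The canonical embedding `E_{m,n} : M_m(ℂ) → M_n(ℂ)` (for `m ∣ n`), sending a matrix `B` to
the block-diagonal matrix consisting of `n/m` copies of `B` along the diagonal, written
entrywise via the identification `i ↦ (i / m, i % m)` of `Fin n` with `Fin (n/m) × Fin m`. -/
def canonicalMatrixEmbedding (m n : ℕ) (hm : 0 < m) :
    Matrix (Fin m) (Fin m) ℂ → Matrix (Fin n) (Fin n) ℂ :=
  fun B i j =>
    if (i : ℕ) / m = (j : ℕ) / m then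
      B ⟨(i : ℕ) % m, Nat.mod_lt _ hm⟩ ⟨(j : ℕ) % m, Nat.mod_lt _ hm⟩
    else 0

namespace UHFaux
open scoped Matrix.Norms.L2Operator
open Filter Topology

lemma emb_comp {m n p : ℕ} (hm : 0 < m) (hn : 0 < n) (h : m ∣ n)
    (B : Matrix (Fin m) (Fin m) ℂ) :
    canonicalMatrixEmbedding n p hn (canonicalMatrixEmbedding m n hm B) =
      canonicalMatrixEmbedding m p hm B := by
  obtain ⟨q, rfl⟩ := h
  have hq : 0 < q := Nat.pos_of_mul_pos_left hn
  ext i j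
  simp only [canonicalMatrixEmbedding, Nat.mod_mul_right_div_self, Nat.mod_mul_right_mod,
    ← Nat.div_div_eq_div_mul]
  by_cases h : (i : ℕ) / m = (j : ℕ) / m
  · simp [h]
  · rw [if_neg h]
    by_cases h1 : (i : ℕ) / m / q = (j : ℕ) / m / q
    · rw [if_pos h1, if_neg]
      intro h2
      apply h
      rw [← Nat.div_add_mod ((i : ℕ) / m) q, ← Nat.div_add_mod ((j : ℕ) / m) q, h1, h2]
    · rw [if_neg h1]

lemma emb_eq {m q : ℕ} (hm : 0 < m) (B : Matrix (Fin m) (Fin m) ℂ) :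
    canonicalMatrixEmbedding m (q * m) hm B =
      Matrix.reindex finProdFinEquiv finProdFinEquiv
        (Matrix.kronecker (1 : Matrix (Fin q) (Fin q) ℂ) B) := by
  ext i j
  simp only [canonicalMatrixEmbedding, Matrix.reindex_apply, Matrix.submatrix_apply,
    Matrix.kronecker, Matrix.kroneckerMap_apply, finProdFinEquiv_symm_apply, Matrix.one_apply,
    Fin.ext_iff, Fin.coe_divNat]
  split_ifs <;> simp [Fin.modNat]

/-- the canonical embedding as a star homomorphism -/
noncomputable def embHom {m n : ℕ} (hm : 0 < m) (h : m ∣ n) :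
    Matrix (Fin m) (Fin m) ℂ →⋆ₐ[ℂ] Matrix (Fin n) (Fin n) ℂ where
  toFun := canonicalMatrixEmbedding m n hm
  map_one' := by
    obtain ⟨q, rfl⟩ := exists_eq_mul_left_of_dvd h
    simp [emb_eq]
  map_mul' x y := by
    obtain ⟨q, rfl⟩ := exists_eq_mul_left_of_dvd h
    simp only [emb_eq]
    simp only [Matrix.reindex_apply, Matrix.submatrix_mul_equiv, Matrix.kronecker]
    rw [← Matrix.mul_kronecker_mul]
    simp
  map_zero' := by ext; simp [canonicalMatrixEmbedding]
  map_add' x y := by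
    ext i j
    simp only [canonicalMatrixEmbedding, Matrix.add_apply]
    split_ifs <;> simp
  commutes' r := by
    obtain ⟨q, rfl⟩ := exists_eq_mul_left_of_dvd h
    simp [emb_eq, Algebra.algebraMap_eq_smul_one, Matrix.kronecker_smul, Matrix.submatrix_smul]
  map_star' x := by
    ext i j
    simp only [canonicalMatrixEmbedding, Matrix.star_apply]
    split_ifs <;> simp_all

lemma embHom_apply {m n : ℕ} (hm : 0 < m) (h : m ∣ n) (B : Matrix (Fin m) (Fin m) ℂ) :
    embHom hm h B = canonicalMatrixEmbedding m n hm B := rfl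

lemma trace_emb {m n : ℕ} (hm : 0 < m) (hn : 0 < n) (h : m ∣ n)
    (B : Matrix (Fin m) (Fin m) ℂ) :
    (canonicalMatrixEmbedding m n hm B).trace / (n : ℂ) = B.trace / (m : ℂ) := by
  obtain ⟨q, rfl⟩ := exists_eq_mul_left_of_dvd h
  have hq : (q : ℂ) ≠ 0 := by
    rintro h; simp [Nat.cast_eq_zero.mp h] at hn
  have hm' : (m : ℂ) ≠ 0 := by exact_mod_cast hm.ne'
  have : (canonicalMatrixEmbedding m (q * m) hm B).trace = q * B.trace := by
    have h2 : ∀ C : Matrix (Fin q × Fin m) (Fin q × Fin m) ℂ,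
        (Matrix.reindex finProdFinEquiv finProdFinEquiv C).trace = C.trace := fun C =>
      Equiv.sum_comp finProdFinEquiv.symm (fun i => C i i)
    rw [emb_eq, h2, Matrix.kronecker, Matrix.trace_kronecker]
    simp
  rw [this]
  push_cast
  field_simp

lemma embHom_injective {m n : ℕ} (hm : 0 < m) (hn : 0 < n) (h : m ∣ n) :
    Function.Injective (embHom hm h) := by
  have : NeZero m := ⟨hm.ne'⟩
  have : NeZero n := ⟨hn.ne'⟩
  exact RingHom.injective (embHom hm h).toAlgHom.toRingHom

lemma norm_entry_le {n : ℕ} (B : Matrix (Fin n) (Fin n) ℂ) (i j : Fin n) : ‖B i j‖ ≤ ‖B‖ := by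
  have h := Matrix.l2_opNorm_mulVec B (EuclideanSpace.single j (1 : ℂ))
  have h2 := PiLp.norm_apply_le (WithLp.toLp 2 (B.mulVec (EuclideanSpace.single j (1 : ℂ)))) i
  simp at h h2
  exact h2.trans h

lemma norm_trace_le {n : ℕ} (hn : 0 < n) (B : Matrix (Fin n) (Fin n) ℂ) :
    ‖B.trace / (n : ℂ)‖ ≤ ‖B‖ := by
  rw [norm_div, Complex.norm_natCast, div_le_iff₀ (by exact_mod_cast hn)]
  calc ‖B.trace‖ ≤ ∑ i : Fin n, ‖B i i‖ := norm_sum_le _ _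
    _ ≤ ∑ i : Fin n, ‖B‖ := Finset.sum_le_sum fun i _ => norm_entry_le B i i
    _ = ‖B‖ * n := by simp [mul_comm]

/-- extension of the normalized trace -/
lemma exists_trace_ext {A : Type*} [CStarAlgebra A] {n : ℕ} (hn : 0 < n)
    (ψ : Matrix (Fin n) (Fin n) ℂ →⋆ₐ[ℂ] A) (hψ : Function.Injective ψ) :
    ∃ f : StrongDual ℂ A, ‖f‖ ≤ 1 ∧ ∀ B, f (ψ B) = B.trace / (n : ℂ) := by
  let e := LinearEquiv.ofInjective ψ.toAlgHom.toLinearMap hψ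
  have hnorm := NonUnitalStarAlgHom.norm_map ψ hψ
  let t : Matrix (Fin n) (Fin n) ℂ →ₗ[ℂ] ℂ := (n : ℂ)⁻¹ • Matrix.traceLinearMap (Fin n) ℂ ℂ
  have ht : ∀ B, t B = B.trace / (n : ℂ) := fun B => by simp [t, div_eq_inv_mul]
  have hb : ∀ x, ‖(t ∘ₗ e.symm.toLinearMap) x‖ ≤ 1 * ‖x‖ := by
    intro x
    obtain ⟨B, rfl⟩ := e.surjective x
    simp only [LinearMap.comp_apply, LinearEquiv.coe_coe, LinearEquiv.symm_apply_apply, ht, one_mul]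
    refine (norm_trace_le hn B).trans (le_of_eq ?_)
    rw [← hnorm B]
    rfl
  let g := LinearMap.mkContinuous (t ∘ₗ e.symm.toLinearMap) 1 hb
  obtain ⟨f, hf, hfn⟩ := exists_extension_norm_eq _ g
  refine ⟨f, hfn.trans_le (LinearMap.mkContinuous_norm_le _ zero_le_one hb), fun B => ?_⟩
  have := hf (e B)
  simp only [g, LinearMap.mkContinuous_apply, LinearMap.comp_apply, LinearEquiv.coe_coe, LinearEquiv.symm_apply_apply, ht] at this
  exact this

/-- trace of an idempotent -/
lemma trace_idem {n : ℕ} (P : Matrix (Fin n) (Fin n) ℂ) (h : P * P = P) :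
    ∃ r : ℕ, P.trace = r := by
  have h1 : IsIdempotentElem (Matrix.toLin' P) := by
    rw [IsIdempotentElem, Module.End.mul_eq_comp, ← Matrix.toLin'_mul, h]
  have h2 := (LinearMap.IsIdempotentElem.isProj_range _ h1).trace
  rw [Matrix.trace_toLin'_eq] at h2
  exact ⟨_, h2⟩

/-- idempotent near a near-projection -/
lemma exists_idem {n : ℕ} (x : Matrix (Fin n) (Fin n) ℂ) (hx : IsSelfAdjoint x) {δ : ℝ} 
    (h : ‖x * x - x‖ ≤ δ) : ∃ p, p * p = p ∧ star p = p ∧ ‖p - x‖ ≤ 2 * δ := by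
  have hδ : 0 ≤ δ := (norm_nonneg _).trans h
  have hfin : (spectrum ℝ x).Finite := Matrix.finite_real_spectrum
  have hc : ∀ f : ℝ → ℝ, ContinuousOn f (spectrum ℝ x) := fun f => hfin.continuousOn f
  let f : ℝ → ℝ := fun t => if 1 / 2 < t then 1 else 0
  refine ⟨cfc f x, ?_, (cfc_predicate f x : IsSelfAdjoint _), ?_⟩
  · rw [← cfc_mul f f x (hc _) (hc _)]
    congr 1
    ext t
    simp [f]
  · have h1 : cfc f x - x = cfc (fun t => f t - t) x := by
      rw [cfc_sub f (fun t : ℝ => t) x (hc _) (hc _), cfc_id' ℝ x]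
    have h2 : x * x - x = cfc (fun t : ℝ => t * t - t) x := by
      rw [cfc_sub (fun t : ℝ => t * t) (fun t : ℝ => t) x (hc _) (hc _), 
        cfc_mul (fun t : ℝ => t) (fun t : ℝ => t) x (hc _) (hc _), cfc_id' ℝ x]
    rw [h1]
    apply norm_cfc_le (by positivity)
    intro t ht
    have h3 := norm_apply_le_norm_cfc (fun t : ℝ => t * t - t) x ht (hc _)
    rw [← h2] at h3
    have h4 := h3.trans h
    simp only [Real.norm_eq_abs, f] at h4 ⊢
    rw [abs_le] at h4 ⊢
    split_ifs with h5 <;> constructor <;> nlinarith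


lemma isClosed_null {A : Type*} [CStarAlgebra A] (f : ℕ → StrongDual ℂ A) (hf : ∀ L, ‖f L‖ ≤ 1) :
    IsClosed {x : A | Tendsto (fun L => f L x) atTop (𝓝 0)} := by
  rw [← closure_subset_iff_isClosed]
  intro x hx
  rw [Set.mem_ofPred_eq, Metric.tendsto_atTop]
  intro ε hε
  obtain ⟨y, hy, hxy⟩ := Metric.mem_closure_iff.mp hx (ε / 2) (by positivity)
  obtain ⟨N, hN⟩ := Metric.tendsto_atTop.mp hy (ε / 2) (by positivity)
  refine ⟨N, fun L hL => ?_⟩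
  have h1 := hN L hL
  have h2 : ‖f L (x - y)‖ ≤ ‖x - y‖ := by
    simpa using (f L).le_of_opNorm_le (hf L) (x - y)
  rw [dist_eq_norm] at hxy
  rw [dist_zero_right] at h1 ⊢
  have h3 : f L x = f L (x - y) + f L y := by simp
  rw [h3]
  exact (norm_add_le _ _).trans_lt (by linarith)

lemma norm_proj_le {A : Type*} [CStarAlgebra A] {e : A} (he : e * e = e) (hes : star e = e) :
    ‖e‖ ≤ 1 := by
  have := CStarRing.norm_star_mul_self (x := e)
  rw [hes, he] at this
  nlinarith [norm_nonneg e]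

lemma dvd_of_le {n : ℕ → ℕ} (hndvd : ∀ j, n j ∣ n (j + 1))
    {i j : ℕ} (h : i ≤ j) : n i ∣ n j := by
  induction j, h using Nat.le_induction with
  | base => exact dvd_rfl
  | succ j _ ih => exact ih.trans (hndvd j)

lemma emb_self {m : ℕ} (hm : 0 < m) (B : Matrix (Fin m) (Fin m) ℂ) :
    canonicalMatrixEmbedding m m hm B = B := by
  ext i j
  simp [canonicalMatrixEmbedding, Nat.mod_eq_of_lt, Nat.div_eq_of_lt]

lemma compat_le {A : Type*} [CStarAlgebra A] {n : ℕ → ℕ} (hn : ∀ j, 0 < n j)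
    (hndvd : ∀ j, n j ∣ n (j + 1))
    (ψ : ∀ j, Matrix (Fin (n j)) (Fin (n j)) ℂ →⋆ₐ[ℂ] A)
    (hψcompat : ∀ j B, ψ j B = ψ (j + 1) (canonicalMatrixEmbedding (n j) (n (j + 1)) (hn j) B))
    {i j : ℕ} (h : i ≤ j) (B : Matrix (Fin (n i)) (Fin (n i)) ℂ) :
    ψ i B = ψ j (canonicalMatrixEmbedding (n i) (n j) (hn i) B) := by
  induction j, h using Nat.le_induction with
  | base => rw [emb_self]
  | succ j hj ih => rw [ih, hψcompat, emb_comp _ _ (dvd_of_le hndvd hj)]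

lemma tendsto_comm {A : Type*} [CStarAlgebra A] {n : ℕ → ℕ} (hn : ∀ j, 0 < n j)
    (hndvd : ∀ j, n j ∣ n (j + 1))
    (ψ : ∀ j, Matrix (Fin (n j)) (Fin (n j)) ℂ →⋆ₐ[ℂ] A)
    (hψcompat : ∀ j B, ψ j B = ψ (j + 1) (canonicalMatrixEmbedding (n j) (n (j + 1)) (hn j) B))
    (f : ℕ → StrongDual ℂ A) (hf : ∀ L, ‖f L‖ ≤ 1)
    (hft : ∀ L B, f L (ψ L B) = B.trace / (n L : ℂ))
    (hψdense : Dense (⋃ j, Set.range (ψ j))) (a b : A) :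
    Tendsto (fun L => f L (a * b - b * a)) atTop (𝓝 0) := by
  have hcl : IsClosed {q : A × A | Tendsto (fun L => f L (q.1 * q.2 - q.2 * q.1)) atTop (𝓝 0)} :=
    (isClosed_null f hf).preimage (f := fun q : A × A => q.1 * q.2 - q.2 * q.1) (by fun_prop)
  have hd := hψdense.prod hψdense
  have hsub : ((⋃ j, Set.range (ψ j)) ×ˢ (⋃ j, Set.range (ψ j))) ⊆
      {q : A × A | Tendsto (fun L => f L (q.1 * q.2 - q.2 * q.1)) atTop (𝓝 0)} := by
    rintro ⟨x, y⟩ ⟨hx, hy⟩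
    obtain ⟨i, X, rfl⟩ := Set.mem_iUnion.mp hx
    obtain ⟨j, Y, rfl⟩ := Set.mem_iUnion.mp hy
    apply tendsto_const_nhds.congr'
    filter_upwards [eventually_ge_atTop i, eventually_ge_atTop j] with L h1 h2
    rw [compat_le hn hndvd ψ hψcompat h1, compat_le hn hndvd ψ hψcompat h2, ← map_mul, ← map_mul,
      ← map_sub, hft, Matrix.trace_sub, Matrix.trace_mul_comm]
    simp
  have := closure_minimal hsub hcl
  rw [hd.closure_eq] at this
  exact this (Set.mem_univ (a, b))

lemma exists_near_idem {A : Type*} [CStarAlgebra A] {n : ℕ → ℕ}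
    (ψ : ∀ j, Matrix (Fin (n j)) (Fin (n j)) ℂ →⋆ₐ[ℂ] A)
    (hψinj : ∀ j, Function.Injective (ψ j))
    (hψdense : Dense (⋃ j, Set.range (ψ j)))
    (e : A) (he : e * e = e) (hes : star e = e) :
    ∃ l P, P * P = P ∧ star P = P ∧ ‖ψ l P - e‖ < 1 / 2 := by
  have hne : ‖e‖ ≤ 1 := norm_proj_le he hes
  obtain ⟨x, hx, hxe⟩ := Metric.mem_closure_iff.mp (hψdense e) (1 / 20) (by norm_num)
  obtain ⟨l, X, rfl⟩ := Set.mem_iUnion.mp hx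
  rw [dist_comm, dist_eq_norm] at hxe
  let Y := (1 / 2 : ℂ) • (X + star X)
  have hY : IsSelfAdjoint Y := by
    simp [Y, IsSelfAdjoint, star_smul, add_comm]
  have hd : ‖ψ l Y - e‖ ≤ 1 / 20 := by
    have h1 : ψ l Y - e = (1 / 2 : ℂ) • ((ψ l X - e) + star (ψ l X - e)) := by
      simp only [Y, map_smul, map_add, map_star, star_sub, hes]
      module
    rw [h1, norm_smul]
    have := norm_add_le (ψ l X - e) (star (ψ l X - e))
    rw [norm_star] at this
    have h2 : ‖(1 / 2 : ℂ)‖ = 1 / 2 := by norm_num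
    rw [h2]
    linarith
  have hq : ‖Y * Y - Y‖ ≤ 61 / 400 := by
    rw [← NonUnitalStarAlgHom.norm_map (ψ l) (hψinj l), map_sub, map_mul]
    set y := ψ l Y
    have h1 : y * y - y = e * (y - e) + (y - e) * e + (y - e) * (y - e) - (y - e) := by
      have : e * (y - e) + (y - e) * e + (y - e) * (y - e) - (y - e) = y * y - y - (e * e - e) := by
        noncomm_ring
      rw [this, he]; simp
    have h2 := norm_mul_le e (y - e)
    have h3 := norm_mul_le (y - e) e
    have h4 := norm_mul_le (y - e) (y - e)
    have h5 := norm_sub_le (e * (y - e) + (y - e) * e + (y - e) * (y - e)) (y - e)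
    have h6 := norm_add_le (e * (y - e) + (y - e) * e) ((y - e) * (y - e))
    have h7 := norm_add_le (e * (y - e)) ((y - e) * e)
    rw [h1]
    have := norm_nonneg (y - e)
    nlinarith [norm_nonneg e]
  obtain ⟨P, hP, hPs, hPY⟩ := exists_idem Y hY hq
  refine ⟨l, P, hP, hPs, ?_⟩
  rw [← NonUnitalStarAlgHom.norm_map (ψ l) (hψinj l), map_sub] at hPY
  calc ‖ψ l P - e‖ = ‖(ψ l P - ψ l Y) + (ψ l Y - e)‖ := by congr 1; abel
    _ ≤ _ := norm_add_le _ _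
    _ < 1 / 2 := by linarith

lemma exists_similar {A : Type*} [CStarAlgebra A]
    (p e : A) (hp : p * p = p) (he : e * e = e)
    (hpn : ‖p‖ ≤ 1) (hen : ‖e‖ ≤ 1) (h : ‖p - e‖ < 1 / 2) :
    ∃ a b : A, p - e = a * b - b * a := by
  have hs : ‖p * (p - e) - (p - e) * e‖ < 1 := by
    have h1 := norm_mul_le p (p - e)
    have h2 := norm_mul_le (p - e) e
    have h3 := norm_sub_le (p * (p - e)) ((p - e) * e)
    nlinarith [norm_nonneg (p - e), norm_nonneg p, norm_nonneg e]
  let s := Units.oneSub _ hs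
  have hsv : (s : A) = 1 - (p * (p - e) - (p - e) * e) := rfl
  have h1 : p * s = s * e := by
    rw [hsv]
    have : p * (1 - (p * (p - e) - (p - e) * e)) - (1 - (p * (p - e) - (p - e) * e)) * e = 0 := by
      simp only [mul_sub, sub_mul, mul_one, one_mul, hp, he, mul_assoc]
      simp only [← mul_assoc, hp]
      abel
    exact sub_eq_zero.mp this
  refine ⟨s, e * ↑s⁻¹, ?_⟩
  rw [← mul_assoc, ← h1]
  simp [mul_assoc]

lemma exists_dvd {A : Type*} [CStarAlgebra A] {n : ℕ → ℕ} (hn : ∀ j, 0 < n j)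
    (hndvd : ∀ j, n j ∣ n (j + 1))
    (ψ : ∀ j, Matrix (Fin (n j)) (Fin (n j)) ℂ →⋆ₐ[ℂ] A)
    (hψcompat : ∀ j B, ψ j B = ψ (j + 1) (canonicalMatrixEmbedding (n j) (n (j + 1)) (hn j) B))
    (hψinj : ∀ j, Function.Injective (ψ j))
    (hψdense : Dense (⋃ j, Set.range (ψ j))) {m : ℕ} (hm : 0 < m)
    (φ : Matrix (Fin m) (Fin m) ℂ →⋆ₐ[ℂ] A) : ∃ l, m ∣ n l := by
  choose f hf hft using fun L => exists_trace_ext (hn L) (ψ L) (hψinj L)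
  have hcomm := tendsto_comm hn hndvd ψ hψcompat f hf hft hψdense
  let i0 : Fin m := ⟨0, hm⟩
  let e : Fin m → Fin m → A := fun i j => φ (Matrix.single i j 1)
  have hmul : ∀ i j k, e i j * e j k = e i k := fun i j k => by
    simp only [e, ← map_mul, Matrix.single_mul_single_same, mul_one]
  have hsum : ∑ i, e i i = 1 := by
    simp only [e, ← map_sum]
    rw [← map_one φ]
    congr 1
    ext i j
    simp [Matrix.sum_apply, Matrix.single_apply, Matrix.one_apply, ite_and]
  have h1 : Tendsto (fun L => 1 - (m : ℂ) * f L (e i0 i0)) atTop (𝓝 0) := by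
    have : Tendsto (fun L => ∑ i : Fin m, f L (e i i0 * e i0 i - e i0 i * e i i0)) atTop
        (𝓝 (∑ i : Fin m, 0)) := tendsto_finsetSum _ fun i _ => hcomm _ _
    rw [Finset.sum_const_zero] at this
    refine this.congr fun L => ?_
    simp only [hmul, map_sub, Finset.sum_sub_distrib]
    rw [← map_sum, hsum, ← map_one (ψ L), hft]
    have : (n L : ℂ) ≠ 0 := by exact_mod_cast (hn L).ne'
    simp [this]
  have hes : star (e i0 i0) = e i0 i0 := by
    simp only [e, ← map_star]; congr 1; simp [Matrix.star_eq_conjTranspose]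
  obtain ⟨l, P, hP, hPs, hPe⟩ := exists_near_idem ψ hψinj hψdense (e i0 i0)
    (hmul _ _ _) hes
  obtain ⟨a, b, hab⟩ := exists_similar (ψ l P) (e i0 i0) (by rw [← map_mul, hP]) (hmul _ _ _)
    (norm_proj_le (by rw [← map_mul, hP]) (by rw [← map_star, hPs])) (norm_proj_le (hmul _ _ _) hes) hPe
  have h2 := hcomm a b
  rw [← hab] at h2
  obtain ⟨r, hr⟩ := trace_idem P hP
  have h3 : Tendsto (fun _ : ℕ => 1 - (m : ℂ) * (r / n l)) atTop (𝓝 0) := by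
    have h4 := h1.sub (h2.const_mul (m : ℂ))
    rw [mul_zero, sub_zero] at h4
    refine h4.congr' ?_
    filter_upwards [eventually_ge_atTop l] with L hL
    rw [map_sub, compat_le hn hndvd ψ hψcompat hL, hft,
      trace_emb _ (hn L) (dvd_of_le hndvd hL), hr]
    ring
  have h5 := tendsto_nhds_unique h3 tendsto_const_nhds
  have hnl : (n l : ℂ) ≠ 0 := by exact_mod_cast (hn l).ne'
  refine ⟨l, r, ?_⟩
  field_simp at h5
  have : (n l : ℂ) = m * r := by linear_combination -h5
  exact_mod_cast this

lemma exists_dvd_gt {A : Type*} [CStarAlgebra A] {n : ℕ → ℕ} (hn : ∀ j, 0 < n j)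
    (hndvd : ∀ j, n j ∣ n (j + 1))
    (ψ : ∀ j, Matrix (Fin (n j)) (Fin (n j)) ℂ →⋆ₐ[ℂ] A)
    (hψcompat : ∀ j B, ψ j B = ψ (j + 1) (canonicalMatrixEmbedding (n j) (n (j + 1)) (hn j) B))
    (hψinj : ∀ j, Function.Injective (ψ j))
    (hψdense : Dense (⋃ j, Set.range (ψ j))) {m : ℕ} (hm : 0 < m)
    (φ : Matrix (Fin m) (Fin m) ℂ →⋆ₐ[ℂ] A) (N : ℕ) : ∃ l, N < l ∧ m ∣ n l := by
  obtain ⟨l, hl⟩ := exists_dvd hn hndvd ψ hψcompat hψinj hψdense hm φ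
  exact ⟨max l (N + 1), by simp, hl.trans (dvd_of_le hndvd (le_max_left _ _))⟩


/-- gluing isometric partial isomorphisms -/
lemma exists_glue {A : Type*} [CStarAlgebra A] {m : ℕ → ℕ}
    (φ θ : ∀ j, Matrix (Fin (m j)) (Fin (m j)) ℂ →⋆ₐ[ℂ] A)
    (hφ : ∀ j, Function.Injective (φ j)) (hθ : ∀ j, Function.Injective (θ j))
    (hc : ∀ i j, i ≤ j → ∀ B, ∃ C, φ i B = φ j C ∧ θ i B = θ j C)
    (hφd : Dense (⋃ j, Set.range (φ j))) (hθd : Dense (⋃ j, Set.range (θ j))) :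
    ∃ γ : A ≃⋆ₐ[ℂ] A, ∀ j B, γ (φ j B) = θ j B := by
  let S : ℕ → StarSubalgebra ℂ (A × A) := fun j => ((φ j).prod (θ j)).range
  have hS : Monotone S := by
    rintro i j hij _ ⟨B, rfl⟩
    obtain ⟨C, h1, h2⟩ := hc i j hij B
    exact ⟨C, Prod.ext h1.symm h2.symm⟩
  let G := (iSup S).topologicalClosure
  have hGset : (G : Set (A × A)) = closure (⋃ j, (S j : Set (A × A))) := by
    rw [StarSubalgebra.topologicalClosure_coe,
      StarSubalgebra.coe_iSup_of_directed hS.directed_le]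
  have hmem : ∀ j B, (φ j B, θ j B) ∈ G := fun j B => by
    rw [← SetLike.mem_coe, hGset]
    exact subset_closure (Set.mem_iUnion.mpr ⟨j, B, rfl⟩)
  have hnorm : ∀ g ∈ G, ‖g.1‖ = ‖g.2‖ := by
    intro g hg
    rw [← SetLike.mem_coe, hGset] at hg
    refine closure_minimal (t := {g : A × A | ‖g.1‖ = ‖g.2‖}) ?_
      (isClosed_eq (by fun_prop) (by fun_prop)) hg
    intro g hg
    obtain ⟨j, B, rfl⟩ := Set.mem_iUnion.mp hg
    change ‖φ j B‖ = ‖θ j B‖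
    rw [NonUnitalStarAlgHom.norm_map _ (hφ j), NonUnitalStarAlgHom.norm_map _ (hθ j)]
  have hGc : IsClosed (G : Set (A × A)) := StarSubalgebra.isClosed_topologicalClosure _
  have : CompleteSpace G := hGc.completeSpace_coe
  have key : ∀ π : G →⋆ₐ[ℂ] A, (∀ g, ‖π g‖ = ‖g‖) → Dense (Set.range π) →
      Function.Bijective π := by
    intro π h1 h2
    have hi : Isometry π := AddMonoidHomClass.isometry_of_norm π h1
    refine ⟨hi.injective, ?_⟩
    rw [← Set.range_eq_univ, ← hi.isClosedEmbedding.isClosed_range.closure_eq]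
    exact h2.closure_eq
  let π1 : G →⋆ₐ[ℂ] A := (StarAlgHom.fst ℂ A A).comp G.subtype
  let π2 : G →⋆ₐ[ℂ] A := (StarAlgHom.snd ℂ A A).comp G.subtype
  have b1 : Function.Bijective π1 := by
    refine key π1 (fun g => ?_) (hφd.mono ?_)
    · have := hnorm g g.2
      change ‖(g : A × A).1‖ = ‖(g : A × A)‖
      rw [Prod.norm_def, ← this, max_self]
    · intro x hx
      obtain ⟨j, B, rfl⟩ := Set.mem_iUnion.mp hx
      exact ⟨⟨_, hmem j B⟩, rfl⟩
  have b2 : Function.Bijective π2 := by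
    refine key π2 (fun g => ?_) (hθd.mono ?_)
    · have := hnorm g g.2
      change ‖(g : A × A).2‖ = ‖(g : A × A)‖
      rw [Prod.norm_def, this, max_self]
    · intro x hx
      obtain ⟨j, B, rfl⟩ := Set.mem_iUnion.mp hx
      exact ⟨⟨_, hmem j B⟩, rfl⟩
  refine ⟨(StarAlgEquiv.ofBijective π1 b1).symm.trans (StarAlgEquiv.ofBijective π2 b2),
    fun j B => ?_⟩
  have h1 : φ j B = StarAlgEquiv.ofBijective π1 b1 ⟨_, hmem j B⟩ := rfl
  rw [h1, StarAlgEquiv.trans_apply, StarAlgEquiv.symm_apply_apply]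
  rfl

end UHFaux

/-- given two compatible unital matricial inductive systems with dense union in a
unital C*-algebra `A`, there are interleaving divisibility sequences and a *-automorphism `γ`
of `A` intertwining the two systems via the canonical embeddings.  (This is the key step in
the computable categoricity of UHF algebras.) -/
theorem uhf_intertwining_automorphism
    {A : Type*} [CStarAlgebra A]
    (m n : ℕ → ℕ) (hm : ∀ j, 0 < m j) (hn : ∀ j, 0 < n j)
    (hmdvd : ∀ j, m j ∣ m (j + 1)) (hndvd : ∀ j, n j ∣ n (j + 1))
    (φ : ∀ j, Matrix (Fin (m j)) (Fin (m j)) ℂ →⋆ₐ[ℂ] A)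
    (ψ : ∀ j, Matrix (Fin (n j)) (Fin (n j)) ℂ →⋆ₐ[ℂ] A)
    (hφinj : ∀ j, Function.Injective (φ j))
    (hψinj : ∀ j, Function.Injective (ψ j))
    (hφcompat : ∀ j B, φ j B = φ (j + 1) (canonicalMatrixEmbedding (m j) (m (j + 1)) (hm j) B))
    (hψcompat : ∀ j B, ψ j B = ψ (j + 1) (canonicalMatrixEmbedding (n j) (n (j + 1)) (hn j) B))
    (hφdense : Dense (⋃ j, Set.range (φ j)))
    (hψdense : Dense (⋃ j, Set.range (ψ j))) :
    ∃ (k l : ℕ → ℕ), StrictMono k ∧ StrictMono l ∧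
      (∀ j, m (k j) ∣ n (l j)) ∧ (∀ j, n (l j) ∣ m (k (j + 1))) ∧
      ∃ γ : A ≃⋆ₐ[ℂ] A,
        ∀ j B, γ (φ (k j) B) = ψ (l j) (canonicalMatrixEmbedding (m (k j)) (n (l j)) (hm (k j)) B) := by
  choose F hF1 hF2 using fun i =>
    UHFaux.exists_dvd_gt hn hndvd ψ hψcompat hψinj hψdense (hm i) (φ i)
  choose G hG1 hG2 using fun i =>
    UHFaux.exists_dvd_gt hm hmdvd φ hφcompat hφinj hφdense (hn i) (ψ i)
  let q : ℕ → ℕ × ℕ := fun j =>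
    Nat.rec (0, F 0 0) (fun _ p => (G p.2 p.1, F (G p.2 p.1) p.2)) j
  let k : ℕ → ℕ := fun j => (q j).1
  let l : ℕ → ℕ := fun j => (q j).2
  have hk : ∀ j, k (j + 1) = G (l j) (k j) := fun j => rfl
  have hl : ∀ j, l (j + 1) = F (k (j + 1)) (l j) := fun j => rfl
  have hkm : StrictMono k := strictMono_nat_of_lt_succ fun j => by rw [hk]; exact hG1 _ _
  have hlm : StrictMono l := strictMono_nat_of_lt_succ fun j => by rw [hl]; exact hF1 _ _
  have d1 : ∀ j, m (k j) ∣ n (l j) := by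
    rintro (_ | j)
    · exact hF2 _ _
    · rw [hl]; exact hF2 _ _
  have d2 : ∀ j, n (l j) ∣ m (k (j + 1)) := fun j => by rw [hk]; exact hG2 _ _
  have cφ := fun {i j : ℕ} (h : i ≤ j) => UHFaux.compat_le hm hmdvd φ hφcompat h
  have cψ := fun {i j : ℕ} (h : i ≤ j) => UHFaux.compat_le hn hndvd ψ hψcompat h
  refine ⟨k, l, hkm, hlm, d1, d2, ?_⟩
  refine UHFaux.exists_glue (fun j => φ (k j))
    (fun j => (ψ (l j)).comp (UHFaux.embHom (hm (k j)) (d1 j))) (fun j => hφinj _)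
    (fun j => (hψinj _).comp (UHFaux.embHom_injective (hm _) (hn _) (d1 j))) ?_ ?_ ?_
  · intro i j hij B
    refine ⟨_, cφ (hkm.monotone hij) B, ?_⟩
    simp only [StarAlgHom.comp_apply, UHFaux.embHom_apply]
    rw [cψ (hlm.monotone hij), UHFaux.emb_comp _ _ (d1 i),
      UHFaux.emb_comp _ _ (UHFaux.dvd_of_le hmdvd (hkm.monotone hij))]
  · refine hφdense.mono (Set.iUnion_subset fun i => ?_)
    rintro _ ⟨B, rfl⟩
    exact Set.mem_iUnion.mpr ⟨i, _, (cφ hkm.le_apply B).symm⟩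
  · refine hψdense.mono (Set.iUnion_subset fun i => ?_)
    rintro _ ⟨B, rfl⟩
    refine Set.mem_iUnion.mpr ⟨i + 1, canonicalMatrixEmbedding _ _ (hn _)
      (canonicalMatrixEmbedding _ (n (l i)) (hn i) B), ?_⟩
    simp only [StarAlgHom.comp_apply, UHFaux.embHom_apply]
    rw [cψ (hlm.le_apply : i ≤ l i), cψ (hlm.monotone (Nat.le_succ i)),
      UHFaux.emb_comp _ _ (d2 i)]
end

section
/- Let ε : ℕ → ℕ∞ be any function, and let G be the additive subgroup of ℚ generated by the set {x : ℚ | ∃ p m, p is prime ∧ (m : ℕ∞) ≤ ε p ∧ x = 1/(p^m)}. Then for every prime p and every natural number m, one has 1/(p^m) ∈ G if and only if (m : ℕ∞) ≤ ε p. Equivalently, the element 1 ∈ G is divisible by p^m in G (there exists g ∈ G with p^m · g = 1) exactly when (m : ℕ∞) ≤ ε p. -/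
/-- for a supernatural number `ε : ℕ → ℕ∞`, in the additive subgroup
`ℚ(ε) ≤ ℚ` generated by the rationals `1 / p ^ m` with `p` prime and `m ≤ ε p`, one has
`1 / p ^ m ∈ ℚ(ε)` iff `m ≤ ε p`; equivalently, `1` is divisible by `p ^ m` in `ℚ(ε)` iff
`m ≤ ε p`. -/
theorem mem_supernatural_subgroup_iff
    (ε : ℕ → ℕ∞)
    (G : AddSubgroup ℚ)
    (hG : G = AddSubgroup.closure
      {x : ℚ | ∃ p m : ℕ, p.Prime ∧ (m : ℕ∞) ≤ ε p ∧ x = 1 / (p : ℚ) ^ m})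
    (p m : ℕ) (hp : p.Prime) :
    ((1 / (p : ℚ) ^ m ∈ G) ↔ (m : ℕ∞) ≤ ε p) ∧
    ((∃ g ∈ G, ((p : ℚ) ^ m) * g = 1) ↔ (m : ℕ∞) ≤ ε p) := by
  have hF : Fact p.Prime := ⟨hp⟩
  have hp0 : (p : ℚ) ≠ 0 := by exact_mod_cast hp.ne_zero
  have hp1 : (1 : ℚ) < p := by exact_mod_cast hp.one_lt
  have hpn : ∀ k : ℕ, padicNorm p (1 / (p : ℚ) ^ k) = (p : ℚ) ^ k := by
    intro k
    rw [padicNorm.div, padicNorm.one, IsAbsoluteValue.abv_pow (padicNorm p),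
      padicNorm.padicNorm_p_of_prime]
    simp
  have key : (1 / (p : ℚ) ^ m ∈ G) ↔ (m : ℕ∞) ≤ ε p := by
    constructor
    · intro h
      by_contra hlt
      have hm : m ≠ 0 := by
        rintro rfl
        exact hlt (by simp)
      have hall : ∀ x ∈ G, padicNorm p x < (p : ℚ) ^ m := by
        intro x hx
        rw [hG] at hx
        induction hx using AddSubgroup.closure_induction with
        | mem x hx =>
          obtain ⟨q, k, hq, hk, rfl⟩ := hx
          by_cases hqp : q = p
          · subst hqp
            rw [hpn]
            refine pow_lt_pow_right₀ hp1 ?_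
            by_contra hmk
            exact hlt (le_trans (by exact_mod_cast not_lt.mp hmk) hk)
          · have h1 : padicNorm p ((q : ℚ) ^ k) = 1 := by
              have := (padicNorm.nat_eq_one_iff (p := p) (q ^ k)).2 (fun hd =>
                hqp ((Nat.prime_dvd_prime_iff_eq hp hq).1 (hp.dvd_of_dvd_pow hd)).symm)
              exact_mod_cast this
            rw [padicNorm.div, padicNorm.one, h1, div_one]
            exact one_lt_pow₀ hp1 hm
        | zero => rw [padicNorm.zero]; positivity
        | add x y _ _ hx hy => exact lt_of_le_of_lt padicNorm.nonarchimedean (max_lt hx hy)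
        | neg x _ hx => rwa [padicNorm.neg]
      have := hall _ h
      rw [hpn] at this
      exact lt_irrefl _ this
    · intro h
      rw [hG]
      exact AddSubgroup.subset_closure ⟨p, m, hp, h, rfl⟩
  refine ⟨key, ?_⟩
  rw [← key]
  constructor
  · rintro ⟨g, hg, h⟩
    rwa [← eq_one_div_of_mul_eq_one_right h]
  · intro h
    exact ⟨_, h, mul_one_div_cancel (pow_ne_zero _ hp0)⟩
end
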